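/- arXiv:2209.07346 — 4 statements merged into one kernel-verified Lean document; each statement's English description precedes it below -/
import Mathlib

section
/- Let G be a group and let ρ₁ and ρ₂ be semisimple 3-dimensional complex representations of G, both with trivial determinant. If the 7-dimensional representations ρ₁ ⊕ ρ₁* ⊕ 1 and ρ₂ ⊕ ρ₂* ⊕ 1 are isomorphic, then ρ₁ ≅ ρ₂ or ρ₁ ≅ ρ₂*. -/
open Module

variable {G : Type*} [Group G]

/-- A submodule is invariant under a representation. -/
def IsInvariantSubmodule {V : Type*} [AddCommGroup V] [Module ℂ V]
    (ρ : Representation ℂ G V) (p : Submodule ℂ V) : Prop :=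
  ∀ g : G, ∀ v ∈ p, ρ g v ∈ p

/-- A submodule is an irreducible subrepresentation: it is invariant, nonzero, and contains
no invariant submodules other than `⊥` and itself. -/
def IsIrreducibleSubrep {V : Type*} [AddCommGroup V] [Module ℂ V]
    (ρ : Representation ℂ G V) (p : Submodule ℂ V) : Prop :=
  IsInvariantSubmodule ρ p ∧ p ≠ ⊥ ∧
    ∀ q : Submodule ℂ V, IsInvariantSubmodule ρ q → q ≤ p → q = ⊥ ∨ q = p

/-- A representation is irreducible: the space is nonzero and has no invariant subspaces
other than `0` and the whole space. -/
def IsIrreducibleRep {V : Type*} [AddCommGroup V] [Module ℂ V]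
    (ρ : Representation ℂ G V) : Prop :=
  Nontrivial V ∧ ∀ p : Submodule ℂ V, IsInvariantSubmodule ρ p → p = ⊥ ∨ p = ⊤

/-- A representation is semisimple: the space is an (internal) direct sum of irreducible
subrepresentations. -/
def IsSemisimpleRep {V : Type*} [AddCommGroup V] [Module ℂ V]
    (ρ : Representation ℂ G V) : Prop :=
  ∃ (ι : Type) (s : ι → Submodule ℂ V),
    (∀ i, IsIrreducibleSubrep ρ (s i)) ∧ iSupIndep s ∧ iSup s = ⊤

/-- Two representations are isomorphic: there is a `G`-equivariant linear isomorphism. -/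
def RepIso {V W : Type*} [AddCommGroup V] [Module ℂ V] [AddCommGroup W] [Module ℂ W]
    (ρ : Representation ℂ G V) (σ : Representation ℂ G W) : Prop :=
  ∃ e : V ≃ₗ[ℂ] W, ∀ (g : G) (v : V), e (ρ g v) = σ g (e v)

/-- The seven-dimensional representation `ρ ⊕ ρ* ⊕ 1` on `V × V* × ℂ`, where `ρ*` is the
dual (contragredient) representation and `1` is the one-dimensional trivial representation. -/
noncomputable def repSum7 {V : Type*} [AddCommGroup V] [Module ℂ V]
    (ρ : Representation ℂ G V) : Representation ℂ G (V × Module.Dual ℂ V × ℂ) where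
  toFun g := (ρ g).prodMap (((ρ.dual) g).prodMap LinearMap.id)
  map_one' := by
    refine LinearMap.ext fun x => ?_
    simp [LinearMap.prodMap_apply, Module.Dual.transpose_apply, Module.End.one_eq_id]
  map_mul' g h := by
    refine LinearMap.ext fun x => ?_
    simp [LinearMap.prodMap_apply, Module.End.mul_apply, Module.Dual.transpose_apply,
      Module.End.mul_eq_comp, LinearMap.comp_assoc]

theorem aux_perm {ι M : Type*} [Fintype ι] (χ ψ : ι → M)
    (h : Multiset.map χ Finset.univ.val = Multiset.map ψ Finset.univ.val) :
    ∃ σ : ι ≃ ι, ∀ i, ψ (σ i) = χ i := by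
  classical
  have hc : ∀ c : M, Nonempty ({a // χ a = c} ≃ {a // ψ a = c}) := by
    intro c
    rw [← Fintype.card_eq, Fintype.card_subtype, Fintype.card_subtype]
    have := congrArg (Multiset.count c) h
    rw [Multiset.count_map, Multiset.count_map] at this
    simpa [Finset.card, Finset.filter, eq_comm] using this
  exact ⟨Equiv.ofFiberEquiv (fun c => (hc c).some), fun i => Equiv.ofFiberEquiv_map _ i⟩

theorem aux_comb2 {M : Type*} [CommGroup M] (a b c y z : M)
    (h1 : a * b * c = 1) (h2 : a * y * z = 1) (hy : y = b ∨ y = b⁻¹)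
    (h : ({b, c, b⁻¹, c⁻¹} : Multiset M) = {y, z, y⁻¹, z⁻¹}) :
    ({a, b, c} : Multiset M) = {a, y, z} ∨ ({a⁻¹, b⁻¹, c⁻¹} : Multiset M) = {a, y, z} := by
  have hcz : y = b → c = z := by
    rintro rfl
    exact mul_left_cancel (h1.trans h2.symm)
  rcases hy with rfl | rfl
  · left; rw [hcz rfl]
  · have h' : ({b, b⁻¹} + {c, c⁻¹} : Multiset M) = {b, b⁻¹} + {z, z⁻¹} := by
      convert h using 1
      · simp only [Multiset.insert_eq_cons, Multiset.cons_add, Multiset.singleton_add]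
        rw [Multiset.cons_swap c]
      · simp only [Multiset.insert_eq_cons, Multiset.cons_add, Multiset.singleton_add, inv_inv]
        rw [Multiset.cons_swap b, Multiset.cons_swap b z]
    have h3 := add_left_cancel h'
    have hz : z = c ∨ z = c⁻¹ := by
      have : z ∈ ({c, c⁻¹} : Multiset M) := by rw [h3]; simp
      simpa using this
    rcases hz with rfl | rfl
    · left
      have : b⁻¹ = b := by
        have := h1.trans h2.symm
        exact (mul_left_cancel (mul_right_cancel this)).symm
      rw [this]
    · right
      have : a⁻¹ = a := by
        have e1 : a = (b * c)⁻¹ := by rw [eq_inv_iff_mul_eq_one, ← mul_assoc]; exact h1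
        have e2 : a = b * c := by
          have : a * (b * c)⁻¹ = 1 := by rw [mul_inv, ← mul_assoc]; exact h2
          exact mul_inv_eq_one.mp this
        rw [inv_eq_iff_eq_inv, e2]; rw [← e1, e2]
      rw [this]

theorem aux_comb1 {M : Type*} [CommGroup M] (a b c y z : M)
    (h1 : a * b * c = 1) (h2 : a * y * z = 1)
    (h : ({a, b, c, a⁻¹, b⁻¹, c⁻¹} : Multiset M) = {a, y, z, a⁻¹, y⁻¹, z⁻¹}) :
    ({a, b, c} : Multiset M) = {a, y, z} ∨ ({a⁻¹, b⁻¹, c⁻¹} : Multiset M) = {a, y, z} := by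
  have key : ∀ u v : M, ({a, u, v, a⁻¹, u⁻¹, v⁻¹} : Multiset M)
      = {a, a⁻¹} + {u, v, u⁻¹, v⁻¹} := by
    intro u v
    simp only [Multiset.insert_eq_cons, Multiset.cons_add, Multiset.singleton_add]
    rw [Multiset.cons_swap v, Multiset.cons_swap u]
  rw [key, key] at h
  have h3 := add_left_cancel h
  have hy : y ∈ ({b, c, b⁻¹, c⁻¹} : Multiset M) := by rw [h3]; simp
  have hy' : (y = b ∨ y = b⁻¹) ∨ (y = c ∨ y = c⁻¹) := by
    simp at hy; tauto
  rcases hy' with hy | hy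
  · exact aux_comb2 a b c y z h1 h2 hy h3
  · have sw : ∀ u v : M, ({u, v, u⁻¹, v⁻¹} : Multiset M) = {v, u, v⁻¹, u⁻¹} := by
      intro u v
      simp only [Multiset.insert_eq_cons]
      rw [Multiset.cons_swap u, ← Multiset.cons_zero v⁻¹, ← Multiset.cons_zero u⁻¹,
        Multiset.cons_swap u⁻¹]
    have := aux_comb2 a c b y z (by rw [← h1]; exact mul_right_comm _ _ _) h2 hy (by rw [← h3, sw])
    have sw' : ∀ u v w : M, ({w, u, v} : Multiset M) = {w, v, u} := by
      intro u v w
      simp only [Multiset.insert_eq_cons, ← Multiset.cons_zero]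
      rw [Multiset.cons_swap u]
    rw [sw' b c, sw' b⁻¹ c⁻¹]
    exact this

/-- The version where `x` is one of `a, b, c`. -/
theorem aux_comb0 {M : Type*} [CommGroup M] (a b c x y z : M)
    (h1 : a * b * c = 1) (h2 : x * y * z = 1)
    (h : ({a, b, c, a⁻¹, b⁻¹, c⁻¹} : Multiset M) = {x, y, z, x⁻¹, y⁻¹, z⁻¹})
    (hx : x = a ∨ x = b ∨ x = c) :
    ({a, b, c} : Multiset M) = {x, y, z} ∨ ({a⁻¹, b⁻¹, c⁻¹} : Multiset M) = {x, y, z} := by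
  have r : ∀ u v w : M, ({u, v, w} : Multiset M) = {v, w, u} := by
    intro u v w
    simp only [Multiset.insert_eq_cons, ← Multiset.cons_zero]
    rw [Multiset.cons_swap u, Multiset.cons_swap u]
  have six : ∀ u v w u' v' w' : M, ({u, v, w, u', v', w'} : Multiset M)
      = {u, v, w} + {u', v', w'} := by
    intros
    simp only [Multiset.insert_eq_cons, Multiset.cons_add, Multiset.singleton_add]
  rcases hx with rfl | rfl | rfl
  · exact aux_comb1 x b c y z h1 h2 h
  · rw [r a x c, r a⁻¹ x⁻¹ c⁻¹]
    refine aux_comb1 x c a y z (by rw [← h1]; ac_rfl) h2 ?_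
    rw [← h, six, six, r a, r a⁻¹]
  · rw [← r x a b, ← r x⁻¹ a⁻¹ b⁻¹]
    refine aux_comb1 x a b y z (by rw [← h1]; ac_rfl) h2 ?_
    rw [← h, six, six, ← r x a b, ← r x⁻¹ a⁻¹ b⁻¹]

theorem aux_comb {M : Type*} [CommGroup M] (a b c x y z : M)
    (h1 : a * b * c = 1) (h2 : x * y * z = 1)
    (h : ({a, b, c, a⁻¹, b⁻¹, c⁻¹} : Multiset M) = {x, y, z, x⁻¹, y⁻¹, z⁻¹}) :
    ({a, b, c} : Multiset M) = {x, y, z} ∨ ({a⁻¹, b⁻¹, c⁻¹} : Multiset M) = {x, y, z} := by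
  have hx : x ∈ ({a, b, c, a⁻¹, b⁻¹, c⁻¹} : Multiset M) := by rw [h]; simp
  have hx' : (x = a ∨ x = b ∨ x = c) ∨ (x = a⁻¹ ∨ x = b⁻¹ ∨ x = c⁻¹) := by
    simp at hx; tauto
  rcases hx' with hx | hx
  · exact aux_comb0 a b c x y z h1 h2 h hx
  · have := aux_comb0 a⁻¹ b⁻¹ c⁻¹ x y z (by rw [← mul_inv, ← mul_inv, h1, inv_one]) h2
      (by
        rw [← h]
        have six : ∀ u v w u' v' w' : M, ({u, v, w, u', v', w'} : Multiset M)
            = {u, v, w} + {u', v', w'} := by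
          intros
          simp only [Multiset.insert_eq_cons, Multiset.cons_add, Multiset.singleton_add]
        rw [six, six, add_comm]; simp only [inv_inv]) hx
    simp only [inv_inv] at this
    exact this.symm

theorem aux_indep {G : Type*} [Group G] (m n : Multiset (G →* ℂ))
    (h : ∀ g : G, (m.map (fun f => f g)).sum = (n.map (fun f => f g)).sum) : m = n := by
  classical
  have key : ∀ m : Multiset (G →* ℂ), ∀ g, Finsupp.linearCombination ℂ
      (fun f : G →* ℂ => (f : G → ℂ)) (m.toFinsupp.mapRange (fun k : ℕ => (k : ℂ)) Nat.cast_zero) g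
      = (m.map (fun f => f g)).sum := by
    intro m g
    induction m using Multiset.induction_on with
    | empty => simp
    | cons a s ih =>
      rw [← Multiset.singleton_add, map_add, Finsupp.mapRange_add (by simp), map_add,
        Pi.add_apply, ih]
      simp [Finsupp.mapRange_single]
  have h2 := linearIndependent_monoidHom G ℂ
  have h3 := h2 (a₁ := m.toFinsupp.mapRange (fun k : ℕ => (k : ℂ)) Nat.cast_zero)
    (a₂ := n.toFinsupp.mapRange (fun k : ℕ => (k : ℂ)) Nat.cast_zero)
    (by funext g; rw [key, key, h])
  have h4 := Finsupp.mapRange_injective _ Nat.cast_zero Nat.cast_injective h3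
  exact Multiset.toFinsupp.injective h4

/-- Every invariant submodule has an invariant complement. -/
def AuxCompl {G : Type*} [Group G] {V : Type*} [AddCommGroup V] [Module ℂ V]
    (ρ : Representation ℂ G V) : Prop :=
  ∀ p, IsInvariantSubmodule ρ p → ∃ q, IsInvariantSubmodule ρ q ∧ IsCompl p q

theorem aux_inv_sup {G : Type*} [Group G] {V : Type*} [AddCommGroup V] [Module ℂ V]
    {ρ : Representation ℂ G V} {p q : Submodule ℂ V} (hp : IsInvariantSubmodule ρ p)
    (hq : IsInvariantSubmodule ρ q) : IsInvariantSubmodule ρ (p ⊔ q) := by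
  intro g v hv
  obtain ⟨a, ha, b, hb, rfl⟩ := Submodule.mem_sup.mp hv
  rw [map_add]
  exact Submodule.add_mem_sup (hp g a ha) (hq g b hb)

theorem aux_compl_of_ss {G : Type*} [Group G] {V : Type*} [AddCommGroup V] [Module ℂ V]
    [FiniteDimensional ℂ V] {ρ : Representation ℂ G V} (h : IsSemisimpleRep ρ) : AuxCompl ρ := by
  obtain ⟨ι, s, hs, -, htop⟩ := h
  intro p hp
  obtain ⟨q, ⟨hq, hd⟩, hmax⟩ := (wellFounded_gt (α := Submodule ℂ V)).has_min
    {q | IsInvariantSubmodule ρ q ∧ Disjoint p q}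
    ⟨⊥, by intro g v hv; simp_all, disjoint_bot_right⟩
  refine ⟨q, hq, hd, codisjoint_iff.mpr ?_⟩
  rw [eq_top_iff, ← htop, iSup_le_iff]
  intro i
  obtain ⟨hi, hne, hirr⟩ := hs i
  have hpq := aux_inv_sup hp hq
  rcases hirr (s i ⊓ (p ⊔ q)) (fun g v hv => ⟨hi g v hv.1, hpq g v hv.2⟩) inf_le_left with h | h
  · exfalso
    have hdj : Disjoint (p ⊔ q) (s i) := (disjoint_iff.mpr h).symm
    refine hmax (q ⊔ s i) ⟨aux_inv_sup hq hi, hd.disjoint_sup_right_of_disjoint_sup_left hdj⟩ ?_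
    refine lt_of_le_of_ne le_sup_left fun heq => hne ?_
    have h1 : s i ≤ q := by rw [heq]; exact le_sup_right
    exact hdj.symm.eq_bot_of_le (h1.trans le_sup_right)
  · exact inf_eq_left.mp h

theorem aux_compl_dual {G : Type*} [Group G] {V : Type*} [AddCommGroup V] [Module ℂ V]
    [FiniteDimensional ℂ V] {ρ : Representation ℂ G V} (h : AuxCompl ρ) : AuxCompl ρ.dual := by
  intro p hp
  obtain ⟨q, hq, hc⟩ := h p.dualCoannihilator (by
    intro g v hv
    rw [Submodule.mem_dualCoannihilator] at hv ⊢
    intro φ hφ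
    have := hv _ (hp g⁻¹ φ hφ)
    simpa [Representation.dual_apply, Module.Dual.transpose_apply] using this)
  refine ⟨q.dualAnnihilator, ?_, ?_⟩
  · intro g φ hφ
    rw [Submodule.mem_dualAnnihilator] at hφ ⊢
    intro w hw
    exact hφ _ (hq g⁻¹ w hw)
  · have := (Subspace.orderIsoFiniteDimensional (K := ℂ) (V := V)).isCompl hc
    have h2 := this.ofDual
    have h3 : IsCompl (p.dualCoannihilator).dualAnnihilator q.dualAnnihilator := h2
    rwa [Subspace.dualCoannihilator_dualAnnihilator_eq] at h3

theorem aux_scalar {V : Type*} [AddCommGroup V] [Module ℂ V]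
    [FiniteDimensional ℂ V] (hV : finrank ℂ V ≤ 1) (T : V →ₗ[ℂ] V) (x : V) :
    T x = LinearMap.det T • x := by
  rcases Nat.le_one_iff_eq_zero_or_eq_one.mp hV with h | h
  · have := finrank_zero_iff.mp h
    exact Subsingleton.elim _ _
  · have hc : ∃ c : ℂ, T = c • LinearMap.id := by
      obtain ⟨v, hv, hs⟩ := finrank_eq_one_iff'.mp h
      obtain ⟨c, hc⟩ := hs (T v)
      refine ⟨c, LinearMap.ext fun w => ?_⟩
      obtain ⟨d, rfl⟩ := hs w
      rw [map_smul, ← hc, LinearMap.smul_apply, LinearMap.id_apply, smul_comm]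
    obtain ⟨c, rfl⟩ := hc
    simp [LinearMap.det_smul, h]

theorem aux_det {V : Type*} [AddCommGroup V] [Module ℂ V]
    [FiniteDimensional ℂ V] (T : V →ₗ[ℂ] V) (p q : Submodule ℂ V) (h : IsCompl p q)
    (hp : ∀ x ∈ p, T x ∈ p) (hq : ∀ x ∈ q, T x ∈ q) :
    LinearMap.det T = LinearMap.det (T.restrict hp) * LinearMap.det (T.restrict hq) := by
  rw [← LinearMap.det_prodMap, ← LinearMap.det_conj _ (Submodule.prodEquivOfIsCompl p q h)]
  congr 1
  refine LinearMap.ext fun x => ?_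
  obtain ⟨y, rfl⟩ := (Submodule.prodEquivOfIsCompl p q h).surjective x
  simp

theorem aux_extend {G : Type*} [Group G] {V W : Type*} [AddCommGroup V] [Module ℂ V]
    [FiniteDimensional ℂ V] [AddCommGroup W] [Module ℂ W] [FiniteDimensional ℂ W]
    (hV : finrank ℂ V = 3) (hW : finrank ℂ W = 3)
    {ρ : Representation ℂ G V} {σ : Representation ℂ G W} (hρ : AuxCompl ρ) (hσ : AuxCompl σ)
    (hdρ : ∀ g, LinearMap.det (ρ g) = 1) (hdσ : ∀ g, LinearMap.det (σ g) = 1)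
    (A : Submodule ℂ V) (hA : IsInvariantSubmodule ρ A) (h2 : 2 ≤ finrank ℂ A)
    (f : A →ₗ[ℂ] W) (hf : Function.Injective f)
    (hfe : ∀ (g : G) (a : A), f ⟨ρ g a, hA g a a.2⟩ = σ g (f a)) : RepIso ρ σ := by
  have hR : IsInvariantSubmodule σ (LinearMap.range f) := by
    rintro g _ ⟨a, rfl⟩
    exact ⟨_, hfe g a⟩
  obtain ⟨B, hB, hAB⟩ := hρ A hA
  obtain ⟨C, hC, hRC⟩ := hσ _ hR
  have e1 := Submodule.finrank_add_eq_of_isCompl hAB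
  have e2 := Submodule.finrank_add_eq_of_isCompl hRC
  rw [LinearMap.finrank_range_of_inj hf] at e2
  let φ := LinearEquiv.ofInjective f hf
  have hφ : ∀ a, (φ a : W) = f a := fun a => rfl
  let ψ : B ≃ₗ[ℂ] C := LinearEquiv.ofFinrankEq B C (by omega)
  let F : V ≃ₗ[ℂ] W := (Submodule.prodEquivOfIsCompl A B hAB).symm ≪≫ₗ
    (LinearEquiv.prodCongr φ ψ) ≪≫ₗ Submodule.prodEquivOfIsCompl _ C hRC
  have hF : ∀ (a : A) (b : B), F (a + b) = f a + ψ b := by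
    intro a b
    have : (Submodule.prodEquivOfIsCompl A B hAB).symm (a + b) = (a, b) := by
      rw [LinearEquiv.symm_apply_eq]; simp
    simp [F, this, hφ]
  refine ⟨F, fun g v => ?_⟩
  obtain ⟨⟨a, b⟩, rfl⟩ := (Submodule.prodEquivOfIsCompl A B hAB).surjective v
  simp only [Submodule.coe_prodEquivOfIsCompl']
  have d1 := aux_det (ρ g) A B hAB (hA g) (hB g)
  have d2 := aux_det (σ g) _ C hRC (hR g) (hC g)
  have d3 : LinearMap.det ((σ g).restrict (hR g)) = LinearMap.det ((ρ g).restrict (hA g)) := by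
    rw [← LinearMap.det_conj _ φ]
    congr 1
    refine LinearMap.ext fun x => ?_
    obtain ⟨y, rfl⟩ := φ.surjective x
    apply Subtype.ext
    simp [hφ]
    exact (hfe g y).symm
  rw [hdρ] at d1
  rw [hdσ, d3] at d2
  have d4 : LinearMap.det ((ρ g).restrict (hB g)) = LinearMap.det ((σ g).restrict (hC g)) := by
    have hne : LinearMap.det ((ρ g).restrict (hA g)) ≠ 0 := by
      intro h0; rw [h0, zero_mul] at d1; exact one_ne_zero d1
    exact mul_left_cancel₀ hne (d1.symm.trans d2)
  have s1 := aux_scalar (by omega) ((ρ g).restrict (hB g)) b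
  have s2 := aux_scalar (by omega) ((σ g).restrict (hC g)) (ψ b)
  have s3 : σ g (ψ b) = ψ ((ρ g).restrict (hB g) b) := by
    rw [s1, map_smul, d4, ← s2]; rfl
  have h5 := hF ⟨ρ g a, hA g a a.2⟩ ((ρ g).restrict (hB g) b)
  rw [hfe, ← s3] at h5
  rw [hF, map_add (ρ g), map_add (σ g), ← h5]
  rfl

theorem aux_schur {G : Type*} [Group G] {V W : Type*} [AddCommGroup V] [Module ℂ V]
    [AddCommGroup W] [Module ℂ W]
    {ρ : Representation ℂ G V} {σ : Representation ℂ G W}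
    (A : Submodule ℂ V) (hA : IsIrreducibleSubrep ρ A)
    (f : A →ₗ[ℂ] W)
    (hfe : ∀ (g : G) (a : A), f ⟨ρ g a, hA.1 g a a.2⟩ = σ g (f a)) :
    Function.Injective f ∨ f = 0 := by
  rcases hA.2.2 ((LinearMap.ker f).map A.subtype) (by
    rintro g _ ⟨a, ha, rfl⟩
    refine ⟨⟨ρ g a, hA.1 g a a.2⟩, ?_, rfl⟩
    have ha' : f a = 0 := ha
    change f _ = 0
    rw [hfe, ha', map_zero]) (Submodule.map_subtype_le _ _) with h | h
  · left
    rw [← LinearMap.ker_eq_bot]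
    apply Submodule.map_injective_of_injective A.injective_subtype
    rw [h, Submodule.map_bot]
  · right
    rw [← LinearMap.ker_eq_top]
    apply Submodule.map_injective_of_injective A.injective_subtype
    rw [h, Submodule.map_subtype_top]

theorem aux_det_dual {G : Type*} [Group G] {V : Type*} [AddCommGroup V] [Module ℂ V]
    [FiniteDimensional ℂ V] {ρ : Representation ℂ G V} (h : ∀ g, LinearMap.det (ρ g) = 1) (g : G) :
    LinearMap.det (ρ.dual g) = 1 := by
  rw [Representation.dual_apply, Module.Dual.transpose]
  exact (LinearMap.det_dualMap _).trans (h g⁻¹)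

theorem aux_big {G : Type*} [Group G] {V W : Type*} [AddCommGroup V] [Module ℂ V]
    [FiniteDimensional ℂ V] [AddCommGroup W] [Module ℂ W] [FiniteDimensional ℂ W]
    (hV : finrank ℂ V = 3) (hW : finrank ℂ W = 3)
    {ρ : Representation ℂ G V} {σ : Representation ℂ G W} (hρ : AuxCompl ρ) (hσ : AuxCompl σ)
    (hdρ : ∀ g, LinearMap.det (ρ g) = 1) (hdσ : ∀ g, LinearMap.det (σ g) = 1)
    (A : Submodule ℂ V) (hA : IsIrreducibleSubrep ρ A) (h2 : 2 ≤ finrank ℂ A)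
    (hiso : RepIso (repSum7 ρ) (repSum7 σ)) : RepIso ρ σ ∨ RepIso ρ σ.dual := by
  obtain ⟨e, he⟩ := hiso
  let f : A →ₗ[ℂ] W × Dual ℂ W × ℂ := e.toLinearMap ∘ₗ LinearMap.inl ℂ V (Dual ℂ V × ℂ) ∘ₗ A.subtype
  have hfe : ∀ (g : G) (a : A), f ⟨ρ g a, hA.1 g a a.2⟩ = repSum7 σ g (f a) := by
    intro g a
    have := he g ((a : V), 0)
    have h0 : repSum7 ρ g ((a : V), 0) = (ρ g a, 0) := by
      refine Prod.ext rfl (Prod.ext ?_ rfl)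
      exact map_zero (ρ.dual g)
    rw [h0] at this
    exact this
  have hinj : Function.Injective f := e.injective.comp
    ((LinearMap.inl_injective).comp A.injective_subtype)
  have f1 := aux_schur (σ := σ) A hA (LinearMap.fst ℂ _ _ ∘ₗ f) (fun g a => by
    simp [hfe, repSum7])
  have f2 := aux_schur (σ := σ.dual) A hA (LinearMap.fst ℂ _ _ ∘ₗ LinearMap.snd ℂ _ _ ∘ₗ f)
    (fun g a => by simp [hfe, repSum7])
  have f3 := aux_schur (σ := Representation.trivial ℂ G ℂ) A hA
    (LinearMap.snd ℂ _ _ ∘ₗ LinearMap.snd ℂ _ _ ∘ₗ f)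
    (fun g a => by simp [hfe, repSum7])
  rcases f1 with f1 | f1
  · left
    exact aux_extend hV hW hρ hσ hdρ hdσ A hA.1 h2 _ f1 (fun g a => by simp [hfe, repSum7])
  rcases f2 with f2 | f2
  · right
    exact aux_extend hV ((Subspace.dual_finrank_eq).trans hW) hρ (aux_compl_dual hσ) hdρ
      (aux_det_dual hdσ) A hA.1 h2 _ f2 (fun g a => by simp [hfe, repSum7])
  exfalso
  rcases f3 with f3 | f3
  · have := LinearMap.finrank_le_finrank_of_injective f3
    simp at this
    omega
  · have hf0 : f = 0 := by
      refine LinearMap.ext fun a => ?_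
      have g1 := LinearMap.congr_fun f1 a
      have g2 := LinearMap.congr_fun f2 a
      have g3 := LinearMap.congr_fun f3 a
      exact Prod.ext g1 (Prod.ext g2 g3)
    apply hA.2.1
    rw [Submodule.eq_bot_iff]
    intro x hx
    have : (⟨x, hx⟩ : A) = 0 := hinj (by rw [hf0]; rfl)
    exact congrArg Subtype.val this

theorem aux_symm {G : Type*} [Group G] {V W : Type*} [AddCommGroup V] [Module ℂ V]
    [AddCommGroup W] [Module ℂ W]
    {ρ : Representation ℂ G V} {σ : Representation ℂ G W} (h : RepIso ρ σ) : RepIso σ ρ := by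
  obtain ⟨e, he⟩ := h
  refine ⟨e.symm, fun g v => ?_⟩
  rw [LinearEquiv.symm_apply_eq, he, LinearEquiv.apply_symm_apply]

theorem aux_dual_symm {G : Type*} [Group G] {V W : Type*} [AddCommGroup V] [Module ℂ V]
    [FiniteDimensional ℂ V] [AddCommGroup W] [Module ℂ W]
    {ρ : Representation ℂ G V} {σ : Representation ℂ G W} (h : RepIso σ ρ.dual) :
    RepIso ρ σ.dual := by
  obtain ⟨e, he⟩ := h
  refine ⟨Module.evalEquiv ℂ V ≪≫ₗ e.dualMap, fun g v => ?_⟩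
  refine LinearMap.ext fun w => ?_
  have := LinearMap.congr_fun (he g⁻¹ w) v
  simp [Representation.dual_apply, Module.Dual.transpose_apply] at this ⊢
  exact this.symm

/-- `ρ` is diagonalised by a basis, with characters `χ`. -/
def AuxDiag {G : Type*} [Group G] {V : Type*} [AddCommGroup V] [Module ℂ V]
    (ρ : Representation ℂ G V) (χ : Fin 3 → (G →* ℂˣ)) : Prop :=
  ∃ b : Basis (Fin 3) ℂ V, ∀ g i, ρ g (b i) = (χ i g : ℂ) • b i

theorem aux_diag_iso {G : Type*} [Group G] {V W : Type*} [AddCommGroup V] [Module ℂ V]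
    [AddCommGroup W] [Module ℂ W]
    {ρ : Representation ℂ G V} {σ : Representation ℂ G W} {χ ψ : Fin 3 → (G →* ℂˣ)}
    (h1 : AuxDiag ρ χ) (h2 : AuxDiag σ ψ)
    (h : Multiset.map χ Finset.univ.val = Multiset.map ψ Finset.univ.val) : RepIso ρ σ := by
  obtain ⟨τ, hτ⟩ := aux_perm χ ψ h
  obtain ⟨b, hb⟩ := h1
  obtain ⟨c, hc⟩ := h2
  refine ⟨b.equiv c τ, fun g v => ?_⟩
  have : (b.equiv c τ).toLinearMap ∘ₗ ρ g = σ g ∘ₗ (b.equiv c τ).toLinearMap := by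
    refine b.ext fun i => ?_
    simp [hb, hc, hτ]
  exact LinearMap.congr_fun this v

theorem aux_diag_dual {G : Type*} [Group G] {V : Type*} [AddCommGroup V] [Module ℂ V]
    {ρ : Representation ℂ G V} {χ : Fin 3 → (G →* ℂˣ)}
    (h1 : AuxDiag ρ χ) : AuxDiag ρ.dual (fun i => (χ i)⁻¹) := by
  obtain ⟨b, hb⟩ := h1
  refine ⟨b.dualBasis, fun g i => b.ext fun j => ?_⟩
  by_cases hij : j = i
  · subst hij
    simp [Representation.dual_apply, Module.Dual.transpose_apply, hb]
  · simp [Representation.dual_apply, Module.Dual.transpose_apply, hb, Finsupp.single_apply, hij]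

theorem aux_diag_trace {G : Type*} [Group G] {V : Type*} [AddCommGroup V] [Module ℂ V]
    {ρ : Representation ℂ G V} {χ : Fin 3 → (G →* ℂˣ)}
    (h1 : AuxDiag ρ χ) (g : G) : LinearMap.trace ℂ V (ρ g) = ∑ i, (χ i g : ℂ) := by
  obtain ⟨b, hb⟩ := h1
  rw [LinearMap.trace_eq_matrix_trace ℂ b, Matrix.trace]
  simp [LinearMap.toMatrix_apply, hb]

theorem aux_diag_det {G : Type*} [Group G] {V : Type*} [AddCommGroup V] [Module ℂ V]
    {ρ : Representation ℂ G V} {χ : Fin 3 → (G →* ℂˣ)}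
    (h1 : AuxDiag ρ χ) (g : G) : LinearMap.det (ρ g) = ∏ i, (χ i g : ℂ) := by
  obtain ⟨b, hb⟩ := h1
  rw [← LinearMap.det_toMatrix b]
  have : LinearMap.toMatrix b b (ρ g) = Matrix.diagonal (fun i => (χ i g : ℂ)) := by
    ext i j
    by_cases hij : j = i
    · subst hij; simp [LinearMap.toMatrix_apply, hb]
    · simp [LinearMap.toMatrix_apply, hb, Finsupp.single_apply, hij, Matrix.diagonal_apply,
        Ne.symm hij]
  rw [this, Matrix.det_diagonal]

theorem aux_diag_exists {G : Type*} [Group G] {V : Type*} [AddCommGroup V] [Module ℂ V]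
    [FiniteDimensional ℂ V] (hV : finrank ℂ V = 3)
    {ρ : Representation ℂ G V} (h : IsSemisimpleRep ρ)
    (hsmall : ∀ A, IsIrreducibleSubrep ρ A → ¬ 2 ≤ finrank ℂ A) :
    ∃ χ : Fin 3 → (G →* ℂˣ), AuxDiag ρ χ := by
  obtain ⟨ι, s, hs, hind, htop⟩ := h
  have hex : ∀ i, ∃ v : V, v ∈ s i ∧ v ≠ 0 := fun i => (Submodule.ne_bot_iff _).mp (hs i).2.1
  choose v hv hv0 using hex
  have hone : ∀ i, finrank ℂ (s i) ≤ 1 := fun i => by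
    have := hsmall _ (hs i); omega
  have hspan : ∀ i, ∀ x ∈ s i, ∃ c : ℂ, c • v i = x := by
    intro i x hx
    have h1 : finrank ℂ (s i) = 1 := by
      refine le_antisymm (hone i) ?_
      exact (Submodule.one_le_finrank_iff).mpr (hs i).2.1
    obtain ⟨c, hc⟩ := (finrank_eq_one_iff_of_nonzero' (⟨v i, hv i⟩ : s i)
      (fun h0 => hv0 i (congrArg Subtype.val h0))).mp h1 ⟨x, hx⟩
    exact ⟨c, congrArg Subtype.val hc⟩
  have hli : LinearIndependent ℂ v := hind.linearIndependent _ hv hv0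
  let b0 : Basis ι ℂ V := Basis.mk hli (by
    rw [← htop, iSup_le_iff]
    intro i x hx
    obtain ⟨c, rfl⟩ := hspan i x hx
    exact Submodule.smul_mem _ _ (Submodule.subset_span ⟨i, rfl⟩))
  have : Fintype ι := FiniteDimensional.fintypeBasisIndex b0
  have hcard : Fintype.card ι = 3 := by rw [← finrank_eq_card_basis b0, hV]
  let e := Fintype.equivFinOfCardEq hcard
  have hc : ∀ (i : ι) (g : G), ∃ c : ℂ, c • v i = ρ g (v i) :=
    fun i g => hspan i _ ((hs i).1 g _ (hv i))
  choose c hc using hc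
  let χ0 : ι → (G →* ℂ) := fun i =>
    { toFun := c i
      map_one' := by
        apply smul_left_injective ℂ (hv0 i)
        simp [hc]
      map_mul' := fun g h => by
        apply smul_left_injective ℂ (hv0 i)
        change c i (g * h) • v i = (c i g * c i h) • v i
        rw [hc, map_mul, Module.End.mul_apply, ← hc i h, map_smul, ← hc i g, smul_smul, mul_comm] }
  refine ⟨fun i => (χ0 (e.symm i)).toHomUnits, b0.reindex e, fun g i => ?_⟩
  simp only [Basis.reindex_apply, MonoidHom.coe_toHomUnits]
  rw [Basis.mk_apply]
  exact (hc _ g).symm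

theorem aux_trace7 {G : Type*} [Group G] {V : Type*} [AddCommGroup V] [Module ℂ V]
    [FiniteDimensional ℂ V] (ρ : Representation ℂ G V) (g : G) :
    LinearMap.trace ℂ _ (repSum7 ρ g) =
      LinearMap.trace ℂ _ (ρ g) + (LinearMap.trace ℂ _ (ρ.dual g) + 1) := by
  have : repSum7 ρ g = (ρ g).prodMap (((ρ.dual) g).prodMap LinearMap.id) := rfl
  rw [this, LinearMap.trace_prodMap', LinearMap.trace_prodMap', LinearMap.trace_id]
  simp

set_option maxHeartbeats 2000000 in
theorem aux_diag_case {G : Type*} [Group G] {V W : Type*} [AddCommGroup V] [Module ℂ V]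
    [FiniteDimensional ℂ V] [AddCommGroup W] [Module ℂ W] [FiniteDimensional ℂ W]
    {ρ : Representation ℂ G V} {σ : Representation ℂ G W}
    (hdρ : ∀ g, LinearMap.det (ρ g) = 1) (hdσ : ∀ g, LinearMap.det (σ g) = 1)
    (χ ψ : Fin 3 → (G →* ℂˣ)) (h1 : AuxDiag ρ χ) (h2 : AuxDiag σ ψ)
    (hiso : RepIso (repSum7 ρ) (repSum7 σ)) : RepIso ρ σ ∨ RepIso ρ σ.dual := by
  obtain ⟨e, he⟩ := hiso
  have htr : ∀ g, LinearMap.trace ℂ _ (repSum7 ρ g) = LinearMap.trace ℂ _ (repSum7 σ g) := by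
    intro g
    rw [← LinearMap.trace_conj' _ e]
    congr 1
    refine LinearMap.ext fun x => ?_
    simp [LinearEquiv.conj_apply, he]
  have p1 : χ 0 * χ 1 * χ 2 = 1 := by
    ext g
    have := aux_diag_det h1 g
    rw [hdρ, Fin.prod_univ_three] at this
    simpa using this.symm
  have p2 : ψ 0 * ψ 1 * ψ 2 = 1 := by
    ext g
    have := aux_diag_det h2 g
    rw [hdσ, Fin.prod_univ_three] at this
    simpa using this.symm
  have hm : ({χ 0, χ 1, χ 2, (χ 0)⁻¹, (χ 1)⁻¹, (χ 2)⁻¹} : Multiset (G →* ℂˣ))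
      = {ψ 0, ψ 1, ψ 2, (ψ 0)⁻¹, (ψ 1)⁻¹, (ψ 2)⁻¹} := by
    have hinj : Function.Injective (fun f : G →* ℂˣ => (Units.coeHom ℂ).comp f) := by
      intro f f' hff
      ext g
      exact DFunLike.congr_fun hff g
    apply Multiset.map_injective hinj
    apply aux_indep
    intro g
    have := htr g
    rw [aux_trace7, aux_trace7, aux_diag_trace h1, aux_diag_trace h2,
      aux_diag_trace (aux_diag_dual h1), aux_diag_trace (aux_diag_dual h2)] at this
    simp only [Fin.sum_univ_three] at this
    simp only [Multiset.insert_eq_cons, Multiset.map_cons, Multiset.map_singleton,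
      Multiset.sum_cons, Multiset.sum_singleton, MonoidHom.comp_apply, Units.coeHom_apply]
    linear_combination this
  have hu : ∀ f : Fin 3 → (G →* ℂˣ),
      Multiset.map f Finset.univ.val = {f 0, f 1, f 2} := by
    intro f; rfl
  rcases aux_comb (χ 0) (χ 1) (χ 2) (ψ 0) (ψ 1) (ψ 2) p1 p2 hm with h | h
  · left
    exact aux_diag_iso h1 h2 (by rw [hu, hu, h])
  · right
    have h' := congrArg (Multiset.map (fun f : G →* ℂˣ => f⁻¹)) h
    simp only [Multiset.insert_eq_cons, Multiset.map_cons, Multiset.map_singleton, inv_inv] at h'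
    exact aux_diag_iso h1 (aux_diag_dual h2) (by rw [hu, hu]; exact h')

/-- **Lemma 2.2(i), representation-theoretic content.**
If `ρ₁` and `ρ₂` are semisimple `3`-dimensional complex representations of a group `G`, both
with trivial determinant, and the `7`-dimensional representations `ρ₁ ⊕ ρ₁* ⊕ 1` and
`ρ₂ ⊕ ρ₂* ⊕ 1` are isomorphic, then `ρ₁ ≅ ρ₂` or `ρ₁ ≅ ρ₂*`. -/
theorem repIso_or_repIso_dual_of_repSum7_iso {G : Type*} [Group G]
    {V₁ V₂ : Type*} [AddCommGroup V₁] [Module ℂ V₁] [AddCommGroup V₂] [Module ℂ V₂]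
    [FiniteDimensional ℂ V₁] [FiniteDimensional ℂ V₂]
    (hdim₁ : Module.finrank ℂ V₁ = 3) (hdim₂ : Module.finrank ℂ V₂ = 3)
    (ρ₁ : Representation ℂ G V₁) (ρ₂ : Representation ℂ G V₂)
    (hss₁ : IsSemisimpleRep ρ₁) (hss₂ : IsSemisimpleRep ρ₂)
    (hdet₁ : ∀ g : G, LinearMap.det (ρ₁ g) = 1)
    (hdet₂ : ∀ g : G, LinearMap.det (ρ₂ g) = 1)
    (hiso : RepIso (repSum7 ρ₁) (repSum7 ρ₂)) :
    RepIso ρ₁ ρ₂ ∨ RepIso ρ₁ ρ₂.dual := by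
  by_cases hb1 : ∃ A, IsIrreducibleSubrep ρ₁ A ∧ 2 ≤ finrank ℂ A
  · obtain ⟨A, hA, h2⟩ := hb1
    exact aux_big hdim₁ hdim₂ (aux_compl_of_ss hss₁) (aux_compl_of_ss hss₂) hdet₁ hdet₂ A hA h2 hiso
  by_cases hb2 : ∃ A, IsIrreducibleSubrep ρ₂ A ∧ 2 ≤ finrank ℂ A
  · obtain ⟨A, hA, h2⟩ := hb2
    rcases aux_big hdim₂ hdim₁ (aux_compl_of_ss hss₂) (aux_compl_of_ss hss₁) hdet₂ hdet₁ A hA h2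
      (aux_symm hiso) with h | h
    · exact Or.inl (aux_symm h)
    · exact Or.inr (aux_dual_symm h)
  push Not at hb1 hb2
  obtain ⟨χ, hχ⟩ := aux_diag_exists hdim₁ hss₁ (fun A hA => not_le.mpr (hb1 A hA))
  obtain ⟨ψ, hψ⟩ := aux_diag_exists hdim₂ hss₂ (fun A hA => not_le.mpr (hb2 A hA))
  exact aux_diag_case hdet₁ hdet₂ χ ψ hχ hψ hiso
end

section
/- Let G be a group and let ρ₁ and ρ₂ be semisimple 3-dimensional complex representations of G, both with trivial determinant. Assume that ρ₁ contains an irreducible 2-dimensional subrepresentation. If ρ₁ ⊕ ρ₁* ⊕ 1 and ρ₂ ⊕ ρ₂* ⊕ 1 are isomorphic as representations of G, then ρ₁ ≅ ρ₂ or ρ₁ ≅ ρ₂*. -/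
open Module

variable {G : Type*} [Group G]

/-- Every invariant submodule has an invariant complement. -/
def InvComplemented {V : Type*} [AddCommGroup V] [Module ℂ V]
    (ρ : Representation ℂ G V) : Prop :=
  ∀ q : Submodule ℂ V, IsInvariantSubmodule ρ q →
    ∃ r : Submodule ℂ V, IsInvariantSubmodule ρ r ∧ IsCompl q r

theorem isInvariantSubmodule_sup {V : Type*} [AddCommGroup V] [Module ℂ V]
    {ρ : Representation ℂ G V} {q r : Submodule ℂ V} (hq : IsInvariantSubmodule ρ q)
    (hr : IsInvariantSubmodule ρ r) : IsInvariantSubmodule ρ (q ⊔ r) := by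
  intro g v hv
  obtain ⟨a, ha, b, hb, rfl⟩ := Submodule.mem_sup.1 hv
  rw [map_add]
  exact Submodule.add_mem_sup (hq g a ha) (hr g b hb)

theorem invComplemented_of_semisimple {V : Type*} [AddCommGroup V] [Module ℂ V]
    [FiniteDimensional ℂ V]
    (ρ : Representation ℂ G V) (h : IsSemisimpleRep ρ) : InvComplemented ρ := by
  intro q hq
  obtain ⟨ι, s, hs, -, htop⟩ := h
  obtain ⟨r, -, hr⟩ := exists_maximal_ge_of_wellFoundedGT
    (fun r : Submodule ℂ V => IsInvariantSubmodule ρ r ∧ Disjoint q r) ⊥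
    ⟨by intro g v hv; simp_all, disjoint_bot_right⟩
  obtain ⟨⟨hri, hrd⟩, hmax⟩ := hr
  refine ⟨r, hri, hrd, ?_⟩
  rw [codisjoint_iff, eq_top_iff, ← htop, iSup_le_iff]
  intro i
  by_contra hi
  have hinv : IsInvariantSubmodule ρ (s i ⊓ (q ⊔ r)) := fun g v hv =>
    ⟨(hs i).1 g v hv.1, isInvariantSubmodule_sup hq hri g v hv.2⟩
  rcases (hs i).2.2 _ hinv inf_le_left with h0 | h0
  · have hd : Disjoint q (r ⊔ s i) :=
      hrd.disjoint_sup_right_of_disjoint_sup_left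
        (disjoint_iff.2 (by rw [inf_comm]; exact h0))
    have := hmax ⟨isInvariantSubmodule_sup hri (hs i).1, hd⟩ le_sup_left
    exact hi ((le_sup_right.trans this).trans le_sup_right)
  · exact hi (inf_eq_left.1 h0)

theorem invComplemented_dual {V : Type*} [AddCommGroup V] [Module ℂ V]
    [FiniteDimensional ℂ V]
    (ρ : Representation ℂ G V) (h : InvComplemented ρ) : InvComplemented ρ.dual := by
  intro q hq
  obtain ⟨r, hr, hc⟩ := h q.dualCoannihilator (by
    intro g v hv
    rw [Submodule.mem_dualCoannihilator] at hv ⊢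
    intro φ hφ
    have := hv _ (hq g⁻¹ φ hφ)
    simpa [Representation.dual_apply, Module.Dual.transpose_apply] using this)
  refine ⟨r.dualAnnihilator, ?_, ?_⟩
  · intro g φ hφ
    rw [Submodule.mem_dualAnnihilator] at hφ ⊢
    intro v hv
    have := hφ _ (hr g⁻¹ v hv)
    simpa [Representation.dual_apply, Module.Dual.transpose_apply] using this
  · have := Subspace.isCompl_dualAnnihilator hc
    rwa [Subspace.dualCoannihilator_dualAnnihilator_eq] at this

theorem det_of_isCompl {V : Type*} [AddCommGroup V] [Module ℂ V] [FiniteDimensional ℂ V]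
    (φ : V →ₗ[ℂ] V) {p q : Submodule ℂ V} (hc : IsCompl p q)
    (hp : ∀ v ∈ p, φ v ∈ p) (hq : ∀ v ∈ q, φ v ∈ q) :
    LinearMap.det φ = LinearMap.det (φ.restrict hp) * LinearMap.det (φ.restrict hq) := by
  rw [← LinearMap.det_prodMap, ← LinearMap.det_conj _ (p.prodEquivOfIsCompl q hc)]
  congr 1
  ext v
  obtain ⟨⟨a, b⟩, rfl⟩ := (p.prodEquivOfIsCompl q hc).surjective v
  simp

theorem eq_det_smul_of_finrank_one {V : Type*} [AddCommGroup V] [Module ℂ V]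
    (h : Module.finrank ℂ V = 1) (φ : V →ₗ[ℂ] V) (v : V) : φ v = LinearMap.det φ • v := by
  obtain ⟨c, hc, -⟩ := LinearMap.existsUnique_eq_smul_id_of_finrank_eq_one h φ
  subst hc
  simp [h]

theorem repIso_key {V W : Type*} [AddCommGroup V] [Module ℂ V] [AddCommGroup W] [Module ℂ W]
    [FiniteDimensional ℂ V] [FiniteDimensional ℂ W]
    (hV : Module.finrank ℂ V = 3) (hW : Module.finrank ℂ W = 3)
    (ρ : Representation ℂ G V) (σ : Representation ℂ G W)
    (hρ : InvComplemented ρ) (hσ : InvComplemented σ)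
    (hdρ : ∀ g : G, LinearMap.det (ρ g) = 1) (hdσ : ∀ g : G, LinearMap.det (σ g) = 1)
    (p : Submodule ℂ V) (hp : IsInvariantSubmodule ρ p) (hp2 : Module.finrank ℂ p = 2)
    (f : p →ₗ[ℂ] W) (hf : Function.Injective f)
    (hfe : ∀ g (v : p), f ⟨ρ g v, hp g v v.2⟩ = σ g (f v)) : RepIso ρ σ := by
  obtain ⟨L, hL, hc⟩ := hρ p hp
  let p' := LinearMap.range f
  have hp' : IsInvariantSubmodule σ p' := by
    rintro g _ ⟨v, rfl⟩
    exact ⟨_, hfe g v⟩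
  obtain ⟨L', hL', hc'⟩ := hσ p' hp'
  let e : p ≃ₗ[ℂ] p' := LinearEquiv.ofInjective f hf
  have he : ∀ g (v : p), e ((ρ g).restrict (hp g) v) = (σ g).restrict (hp' g) (e v) := by
    intro g v
    exact Subtype.ext (hfe g v)
  have hL1 : Module.finrank ℂ L = 1 := by
    have := Submodule.finrank_add_eq_of_isCompl hc
    omega
  have hL1' : Module.finrank ℂ L' = 1 := by
    have := Submodule.finrank_add_eq_of_isCompl hc'
    have := e.finrank_eq
    omega
  have hdet : ∀ g, LinearMap.det ((ρ g).restrict (hL g)) = LinearMap.det ((σ g).restrict (hL' g)) := by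
    intro g
    have h1 := det_of_isCompl (ρ g) hc (hp g) (hL g)
    have h2 := det_of_isCompl (σ g) hc' (hp' g) (hL' g)
    have h3 : LinearMap.det ((σ g).restrict (hp' g)) = LinearMap.det ((ρ g).restrict (hp g)) := by
      rw [← LinearMap.det_conj _ e]
      congr 1
      ext v
      obtain ⟨a, rfl⟩ := e.surjective v
      simp [he]
    rw [hdρ] at h1
    rw [hdσ, h3, h1] at h2
    refine mul_left_cancel₀ ?_ h2
    intro h0
    rw [h0, zero_mul] at h1
    exact one_ne_zero h1
  let e2 : L ≃ₗ[ℂ] L' := LinearEquiv.ofFinrankEq _ _ (hL1.trans hL1'.symm)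
  have he2 : ∀ g (v : L), e2 ((ρ g).restrict (hL g) v) = (σ g).restrict (hL' g) (e2 v) := by
    intro g v
    rw [eq_det_smul_of_finrank_one hL1, eq_det_smul_of_finrank_one hL1', hdet, map_smul]
  refine ⟨(p.prodEquivOfIsCompl L hc).symm ≪≫ₗ (e.prodCongr e2) ≪≫ₗ
    p'.prodEquivOfIsCompl L' hc', fun g v => ?_⟩
  obtain ⟨⟨a, b⟩, rfl⟩ := (p.prodEquivOfIsCompl L hc).surjective v
  have h1 : ρ g (p.prodEquivOfIsCompl L hc (a, b)) =
      p.prodEquivOfIsCompl L hc ((ρ g).restrict (hp g) a, (ρ g).restrict (hL g) b) := by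
    simp
  rw [h1]
  simp only [LinearEquiv.trans_apply, LinearEquiv.symm_apply_apply, LinearEquiv.prodCongr_apply,
    he, he2]
  simp

theorem eq_zero_or_injective {V W : Type*} [AddCommGroup V] [Module ℂ V] [AddCommGroup W]
    [Module ℂ W] {ρ : Representation ℂ G V} {σ : Representation ℂ G W}
    {p : Submodule ℂ V} (hp : IsIrreducibleSubrep ρ p) (f : p →ₗ[ℂ] W)
    (hfe : ∀ g (v : p), f ⟨ρ g v, hp.1 g v v.2⟩ = σ g (f v)) :
    f = 0 ∨ Function.Injective f := by
  rcases hp.2.2 ((LinearMap.ker f).map p.subtype) (by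
    rintro g _ ⟨v, hv, rfl⟩
    refine ⟨⟨ρ g v, hp.1 g v v.2⟩, ?_, rfl⟩
    have hv' : f v = 0 := hv
    change f _ = 0
    rw [hfe, hv', map_zero]) (Submodule.map_subtype_le _ _) with h | h
  · right
    rw [← LinearMap.ker_eq_bot]
    apply Submodule.map_injective_of_injective p.injective_subtype
    rw [h, Submodule.map_bot]
  · left
    rw [← LinearMap.ker_eq_top]
    apply Submodule.map_injective_of_injective p.injective_subtype
    rw [h, Submodule.map_subtype_top]

/-- **The case of an irreducible two-dimensional summand in the proof of Lemma 2.2(i).**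
If `ρ₁` and `ρ₂` are semisimple `3`-dimensional complex representations of a group `G`, both
with trivial determinant, `ρ₁` contains an irreducible `2`-dimensional subrepresentation, and
`ρ₁ ⊕ ρ₁* ⊕ 1` is isomorphic to `ρ₂ ⊕ ρ₂* ⊕ 1`, then `ρ₁ ≅ ρ₂` or `ρ₁ ≅ ρ₂*`. -/
theorem repIso_or_repIso_dual_of_repSum7_iso_of_twoDimSummand {G : Type*} [Group G]
    {V₁ V₂ : Type*} [AddCommGroup V₁] [Module ℂ V₁] [AddCommGroup V₂] [Module ℂ V₂]
    [FiniteDimensional ℂ V₁] [FiniteDimensional ℂ V₂]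
    (hdim₁ : Module.finrank ℂ V₁ = 3) (hdim₂ : Module.finrank ℂ V₂ = 3)
    (ρ₁ : Representation ℂ G V₁) (ρ₂ : Representation ℂ G V₂)
    (hss₁ : IsSemisimpleRep ρ₁) (hss₂ : IsSemisimpleRep ρ₂)
    (hdet₁ : ∀ g : G, LinearMap.det (ρ₁ g) = 1)
    (hdet₂ : ∀ g : G, LinearMap.det (ρ₂ g) = 1)
    (h2dim : ∃ p : Submodule ℂ V₁, IsIrreducibleSubrep ρ₁ p ∧ Module.finrank ℂ p = 2)
    (hiso : RepIso (repSum7 ρ₁) (repSum7 ρ₂)) :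
    RepIso ρ₁ ρ₂ ∨ RepIso ρ₁ ρ₂.dual := by
  obtain ⟨p, hp, hp2⟩ := h2dim
  obtain ⟨e, he⟩ := hiso
  let F : p →ₗ[ℂ] V₂ × Module.Dual ℂ V₂ × ℂ :=
    e.toLinearMap ∘ₗ LinearMap.inl ℂ V₁ (Module.Dual ℂ V₁ × ℂ) ∘ₗ p.subtype
  have hF : Function.Injective F := by
    intro a b hab
    have := e.injective hab
    exact Subtype.ext (congrArg Prod.fst this)
  have hFe : ∀ g (v : p), F ⟨ρ₁ g v, hp.1 g v v.2⟩ = repSum7 ρ₂ g (F v) := by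
    intro g v
    have := he g ((v : V₁), 0)
    rw [show F v = e ((v : V₁), 0) from rfl, ← this]
    change e _ = e _
    simp [repSum7]
    rfl
  have hA := eq_zero_or_injective (σ := ρ₂) hp (LinearMap.fst _ _ _ ∘ₗ F)
    (fun g v => congrArg Prod.fst (hFe g v))
  have hB := eq_zero_or_injective (σ := ρ₂.dual) hp
    (LinearMap.fst _ _ _ ∘ₗ LinearMap.snd _ _ _ ∘ₗ F)
    (fun g v => congrArg (fun x => x.2.1) (hFe g v))
  have hC := eq_zero_or_injective (σ := Representation.trivial ℂ G ℂ) hp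
    (LinearMap.snd _ _ _ ∘ₗ LinearMap.snd _ _ _ ∘ₗ F)
    (fun g v => congrArg (fun x => x.2.2) (hFe g v))
  have hs₁ := invComplemented_of_semisimple ρ₁ hss₁
  have hs₂ := invComplemented_of_semisimple ρ₂ hss₂
  rcases hA with hA | hA
  swap
  · exact Or.inl (repIso_key hdim₁ hdim₂ ρ₁ ρ₂ hs₁ hs₂ hdet₁ hdet₂ p hp.1 hp2 _ hA
      (fun g v => congrArg Prod.fst (hFe g v)))
  rcases hB with hB | hB
  swap
  · refine Or.inr (repIso_key hdim₁ (by rw [Subspace.dual_finrank_eq, hdim₂]) ρ₁ ρ₂.dual hs₁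
      (invComplemented_dual ρ₂ hs₂) hdet₁ ?_ p hp.1 hp2 _ hB
      (fun g v => congrArg (fun x => x.2.1) (hFe g v)))
    intro g
    rw [← hdet₂ g⁻¹, ← LinearMap.det_dualMap (ρ₂ g⁻¹)]
    rfl
  rcases hC with hC | hC
  swap
  · have := LinearMap.finrank_le_finrank_of_injective hC
    rw [hp2, Module.finrank_self] at this
    omega
  exfalso
  apply hp.2.1
  rw [Submodule.eq_bot_iff]
  intro x hx
  have : F ⟨x, hx⟩ = F 0 := by
    rw [map_zero]
    exact Prod.ext (LinearMap.congr_fun hA ⟨x, hx⟩)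
      (Prod.ext (LinearMap.congr_fun hB ⟨x, hx⟩) (LinearMap.congr_fun hC ⟨x, hx⟩))
  exact congrArg Subtype.val (hF this)
end

section
/- Let G be a locally compact Hausdorff, second-countable topological group. Let (πₙ, Hₙ), for n ∈ ℕ, be irreducible unitary representations of G and let (σ, H) be an irreducible unitary representation of G. Assume σ is weakly contained in the Hilbert direct sum of the πₙ, in the following sense: for every unit vector u ∈ H, every compact subset C ⊆ G and every ε > 0, there exist finitely many indices n₁, …, n_m, unit vectors wⱼ ∈ H_{nⱼ}, and nonnegative reals t₁, …, t_m with t₁ + ⋯ + t_m = 1, such that |⟪σ(g)u, u⟫ − Σⱼ tⱼ·⟪π_{nⱼ}(g)wⱼ, wⱼ⟫| < ε for all g ∈ C. Then σ is a limit of a subsequence of (πₙ): for every unit vector u ∈ H there exist a sequence of indices (n_k) and unit vectors v_k ∈ H_{n_k} such that the functions g ↦ ⟪π_{n_k}(g)v_k, v_k⟫ converge to g ↦ ⟪σ(g)u, u⟫ uniformly on every compact subset of G. -/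
open Filter Topology

namespace WCL
open ComplexConjugate

/-- The sesquilinear form on finitely supported functions attached to `α`. -/
noncomputable def form {G : Type*} [Group G] (α : G → ℂ) :
    (G →₀ ℂ) →ₗ⋆[ℂ] (G →₀ ℂ) →ₗ[ℂ] ℂ :=
  LinearMap.mk₂'ₛₗ (starRingEnd ℂ) (RingHom.id ℂ)
    (fun c d => c.sum fun g a => d.sum fun h b => conj a * b * α (h⁻¹ * g))
    (by
      intro c₁ c₂ d
      rw [Finsupp.sum_add_index']
      · simp
      · intro g a b
        simp [add_mul, Finsupp.sum_add])
    (by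
      intro r c d
      rw [Finsupp.sum_smul_index']
      · simp only [smul_eq_mul, map_mul, mul_assoc, Finsupp.sum, Finset.mul_sum]
      · simp)
    (by
      intro c d₁ d₂
      rw [← Finsupp.sum_add]
      refine Finsupp.sum_congr fun g _ => ?_
      rw [Finsupp.sum_add_index']
      · simp
      · intro h a b; ring)
    (by
      intro r c d
      rw [Finsupp.smul_sum]
      refine Finsupp.sum_congr fun g _ => ?_
      rw [Finsupp.sum_smul_index', Finsupp.smul_sum]
      · refine Finsupp.sum_congr fun h _ => ?_
        simp only [smul_eq_mul, RingHom.id_apply]; ring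
      · simp)

lemma form_apply {G : Type*} [Group G] (α : G → ℂ) (c d : G →₀ ℂ) :
    form α c d = c.sum fun g a => d.sum fun h b => conj a * b * α (h⁻¹ * g) := rfl

lemma form_single {G : Type*} [Group G] (α : G → ℂ) (g h : G) (a b : ℂ) :
    form α (Finsupp.single g a) (Finsupp.single h b) = conj a * b * α (h⁻¹ * g) := by
  rw [form_apply, Finsupp.sum_single_index, Finsupp.sum_single_index] <;> simp

lemma form_add {G : Type*} [Group G] (α β : G → ℂ) (c d : G →₀ ℂ) :
    form (fun g => α g + β g) c d = form α c d + form β c d := by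
  simp only [form_apply, mul_add, Finsupp.sum_add]

/-- Functions of positive type. -/
structure PD {G : Type*} [Group G] (α : G → ℂ) : Prop where
  nonneg : ∀ c, 0 ≤ (form α c c).re
  herm : ∀ g, α g⁻¹ = conj (α g)

lemma form_conj {G : Type*} [Group G] {α : G → ℂ} (h : PD α) (c d : G →₀ ℂ) :
    conj (form α d c) = form α c d := by
  simp only [form_apply, Finsupp.sum, map_sum, map_mul]
  rw [Finset.sum_comm]
  refine Finset.sum_congr rfl fun x _ => Finset.sum_congr rfl fun y _ => ?_
  rw [← h.herm]
  simp only [Complex.conj_conj, mul_inv_rev, inv_inv]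
  ring

lemma form_cs {G : Type*} [Group G] {α : G → ℂ} (h : PD α) (c d : G →₀ ℂ) :
    ‖form α c d‖ * ‖form α c d‖ ≤ (form α c c).re * (form α d d).re := by
  let core : PreInnerProductSpace.Core ℂ (G →₀ ℂ) :=
    { inner := fun c d => form α c d
      conj_inner_symm := fun c d => form_conj h c d
      re_inner_nonneg := h.nonneg
      add_left := fun x y z => by simp
      smul_left := fun x y r => by simp }
  have := @InnerProductSpace.Core.inner_mul_inner_self_le ℂ (G →₀ ℂ) _ _ _ core c d
  have h2 : ‖form α d c‖ = ‖form α c d‖ := by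
    rw [← form_conj h c d]; simp
  calc _ = ‖form α c d‖ * ‖form α d c‖ := by rw [h2]
    _ ≤ _ := this

section rep
variable {G : Type*} [Group G] {E : Type*} [NormedAddCommGroup E] [InnerProductSpace ℂ E]

/-- matrix coefficient -/
noncomputable def coef (ρ : G →* (E ≃ₗᵢ[ℂ] E)) (v : E) (g : G) : ℂ := inner ℂ (ρ g v) v

/-- orbit map -/
noncomputable def orb (ρ : G →* (E ≃ₗᵢ[ℂ] E)) (v : E) : (G →₀ ℂ) →ₗ[ℂ] E :=
  Finsupp.linearCombination ℂ (fun g => ρ g v)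

lemma rep_mul (ρ : G →* (E ≃ₗᵢ[ℂ] E)) (g h : G) (v : E) : ρ g (ρ h v) = ρ (g * h) v := by
  rw [map_mul]; rfl

lemma inner_coef (ρ : G →* (E ≃ₗᵢ[ℂ] E)) (v : E) (g h : G) :
    inner ℂ (ρ g v) (ρ h v) = coef ρ v (h⁻¹ * g) := by
  rw [coef, ← (ρ h).inner_map_map (ρ (h⁻¹ * g) v), rep_mul, mul_inv_cancel_left]

lemma form_coef (ρ : G →* (E ≃ₗᵢ[ℂ] E)) (v : E) (c d : G →₀ ℂ) :
    form (coef ρ v) c d = inner ℂ (orb ρ v c) (orb ρ v d) := by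
  simp only [form_apply, orb, Finsupp.linearCombination_apply, Finsupp.sum, sum_inner, inner_sum,
    inner_smul_left, inner_smul_right, inner_coef, Finset.mul_sum]
  rw [Finset.sum_comm]
  refine Finset.sum_congr rfl fun x _ => Finset.sum_congr rfl fun y _ => ?_
  ring

lemma PD_coef (ρ : G →* (E ≃ₗᵢ[ℂ] E)) (v : E) : PD (coef ρ v) where
  nonneg c := by
    rw [form_coef]
    exact inner_self_nonneg (𝕜 := ℂ)
  herm g := by
    rw [coef, coef, inner_conj_symm, ← (ρ g).inner_map_map (ρ g⁻¹ v), rep_mul]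
    simp

lemma PD_sum {ι : Type*} (s : Finset ι) (t : ι → ℝ) (ht : ∀ i, 0 ≤ t i) (α : ι → G → ℂ)
    (h : ∀ i, PD (α i)) : PD (fun g => ∑ i ∈ s, (t i : ℂ) * α i g) where
  nonneg c := by
    have : form (fun g => ∑ i ∈ s, (t i : ℂ) * α i g) c c = ∑ i ∈ s, (t i : ℂ) * form (α i) c c := by
      simp only [form_apply, Finsupp.sum, Finset.mul_sum]
      rw [Finset.sum_comm' (s := s) (t' := c.support) (s' := fun _ => s) (t := fun _ => c.support)
        (by simp)]
      refine Finset.sum_congr rfl fun x _ => ?_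
      rw [Finset.sum_comm]
      refine Finset.sum_congr rfl fun y _ => Finset.sum_congr rfl fun z _ => ?_
      ring
    rw [this, Complex.re_sum]
    refine Finset.sum_nonneg fun i _ => ?_
    rw [Complex.re_ofReal_mul]
    exact mul_nonneg (ht i) ((h i).nonneg c)
  herm g := by
    simp [map_sum, (h _).herm]

lemma PD_lim {ι : Type*} (F : Filter ι) [F.NeBot] (α : ι → G → ℂ) (a : G → ℂ) (h : ∀ i, PD (α i))
    (hl : ∀ g, Tendsto (fun i => α i g) F (𝓝 (a g))) : PD a where
  nonneg c := by
    have : Tendsto (fun i => (form (α i) c c).re) F (𝓝 (form a c c).re) := by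
      refine (Complex.continuous_re.tendsto _).comp ?_
      simp only [form_apply, Finsupp.sum]
      refine tendsto_finsetSum _ fun x _ => tendsto_finsetSum _ fun y _ => ?_
      exact (hl _).const_mul _
    exact ge_of_tendsto' this fun i => (h i).nonneg c
  herm g := by
    refine tendsto_nhds_unique (hl g⁻¹) ?_
    simp only [(h _).herm]
    exact (Complex.continuous_conj.tendsto _).comp (hl g)

end rep

section irr
variable {G : Type*} [Group G] {E : Type*} [NormedAddCommGroup E] [InnerProductSpace ℂ E]
  [CompleteSpace E]

lemma schur (σ : G →* (E ≃ₗᵢ[ℂ] E))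
    (hσirr : Nontrivial E ∧
      ∀ p : Submodule ℂ E, IsClosed (p : Set E) →
        (∀ g : G, ∀ v ∈ p, σ g v ∈ p) → p = ⊥ ∨ p = ⊤)
    (T : E →L[ℂ] E) (hT : IsSelfAdjoint T) (hc : ∀ g x, T (σ g x) = σ g (T x)) :
    ∃ l : ℂ, ∀ x, T x = l • x := by
  obtain ⟨hne, hirr⟩ := hσirr
  have key : ∀ f g : ℝ → ℝ, Continuous f → Continuous g → (∀ x, f x * g x = 0) →
      cfc f T = 0 ∨ cfc g T = 0 := by
    intro f g hf hg hfg
    have hz : cfc f T * cfc g T = 0 := by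
      rw [← cfc_mul f g T hf.continuousOn hg.continuousOn]
      simp only [hfg]
      exact cfc_const_zero ℝ T
    have hcomm : ∀ k x, cfc f T (σ k x) = σ k (cfc f T x) := by
      intro k x
      have : Commute T (σ k : E →L[ℂ] E) := by
        ext y; exact hc k y
      have := this.cfc_real f
      exact congrArg (fun S : E →L[ℂ] E => S x) this.eq
    rcases hirr (LinearMap.ker ((cfc f T : E →L[ℂ] E) : E →ₗ[ℂ] E)) (cfc f T : E →L[ℂ] E).isClosed_ker
      (by
        intro k v hv
        have hv' : cfc f T v = 0 := hv
        show cfc f T (σ k v) = 0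
        rw [hcomm, hv', map_zero]) with h | h
    · right
      ext x
      have : cfc g T x ∈ LinearMap.ker ((cfc f T : E →L[ℂ] E) : E →ₗ[ℂ] E) :=
        congrArg (fun S : E →L[ℂ] E => S x) hz
      rw [h] at this
      exact this
    · left
      ext x
      have : x ∈ LinearMap.ker ((cfc f T : E →L[ℂ] E) : E →ₗ[ℂ] E) := by rw [h]; trivial
      exact this
  have hspec : ∀ f : ℝ → ℝ, Continuous f → cfc f T = 0 → ∀ x ∈ spectrum ℝ T, f x = 0 := by
    intro f hf h0 x hx
    have := cfc_map_spectrum f T hT hf.continuousOn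
    rw [h0, spectrum.zero_eq] at this
    have h2 : f x ∈ Set.image f (spectrum ℝ T) := ⟨x, hx, rfl⟩
    rw [← this] at h2
    exact h2
  have hsub : ∀ x ∈ spectrum ℝ T, ∀ y ∈ spectrum ℝ T, ¬ x < y := by
    intro x hx y hy hxy
    rcases key (fun z => max (z - (x+y)/2) 0) (fun z => max ((x+y)/2 - z) 0) (by fun_prop)
      (by fun_prop) (by
        intro z
        rcases le_total z ((x+y)/2) with h | h
        · rw [max_eq_right (by linarith), zero_mul]
        · rw [max_eq_right (a := (x+y)/2 - z) (by linarith), mul_zero]) with h | h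
    · have := hspec _ (by fun_prop) h y hy
      have h2 := le_max_left (y - (x+y)/2) 0
      linarith
    · have := hspec _ (by fun_prop) h x hx
      have h2 := le_max_left ((x+y)/2 - x) 0
      linarith
  obtain ⟨l, hl⟩ := ContinuousFunctionalCalculus.spectrum_nonempty (R := ℝ) T hT
  refine ⟨(l : ℂ), fun x => ?_⟩
  have : T = algebraMap ℝ (E →L[ℂ] E) l := by
    rw [← cfc_const l T hT]
    conv_lhs => rw [← cfc_id ℝ T hT]
    refine cfc_congr fun y hy => ?_
    exact le_antisymm (not_lt.1 (hsub l hl y hy)) (not_lt.1 (hsub y hy l hl))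
  rw [this]
  simp [Algebra.algebraMap_eq_smul_one]

lemma orb_dense (σ : G →* (E ≃ₗᵢ[ℂ] E))
    (hσirr : Nontrivial E ∧
      ∀ p : Submodule ℂ E, IsClosed (p : Set E) →
        (∀ g : G, ∀ v ∈ p, σ g v ∈ p) → p = ⊥ ∨ p = ⊤)
    (u : E) (hu : u ≠ 0) : DenseRange (orb σ u) := by
  have hmem : ∀ g, σ g u ∈ LinearMap.range (orb σ u) := fun g =>
    ⟨Finsupp.single g 1, by simp [orb]⟩
  rcases hσirr.2 (LinearMap.range (orb σ u)).topologicalClosure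
    (Submodule.isClosed_topologicalClosure _) (by
      intro g v hv
      have hmap : Set.MapsTo (σ g) (LinearMap.range (orb σ u) : Set E)
          (LinearMap.range (orb σ u) : Set E) := by
        rintro _ ⟨c, rfl⟩
        rw [orb, Finsupp.linearCombination_apply, Finsupp.sum, map_sum]
        refine Submodule.sum_mem _ fun h _ => ?_
        rw [map_smul, rep_mul]
        exact Submodule.smul_mem _ _ (hmem _)
      exact hmap.closure (σ g).continuous hv) with h | h
  · exfalso
    have : u ∈ (LinearMap.range (orb σ u)).topologicalClosure := by
      apply Submodule.le_topologicalClosure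
      simpa using hmem 1
    rw [h] at this
    exact hu (by simpa using this)
  · have := Submodule.dense_iff_topologicalClosure_eq_top.2 h
    rw [LinearMap.coe_range] at this
    exact this

lemma extremal (σ : G →* (E ≃ₗᵢ[ℂ] E))
    (hσirr : Nontrivial E ∧
      ∀ p : Submodule ℂ E, IsClosed (p : Set E) →
        (∀ g : G, ∀ v ∈ p, σ g v ∈ p) → p = ⊥ ∨ p = ⊤)
    (u : E) (hu : ‖u‖ = 1) (α β : G → ℂ) (hα : PD α) (hβ : PD β)
    (hab : ∀ g, α g + β g = coef σ u g) (g : G) : α g = α 1 * coef σ u g := by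
  have hd : DenseRange (orb σ u) := orb_dense σ hσirr u (by rintro rfl; simp at hu)
  have hle : ∀ c, (form α c c).re ≤ ‖orb σ u c‖ ^ 2 := by
    intro c
    have h1 := form_add α β c c
    rw [funext hab, form_coef] at h1
    have h2 := congrArg Complex.re h1
    rw [Complex.add_re] at h2
    have h3 : (inner ℂ (orb σ u c) (orb σ u c) : ℂ).re = ‖orb σ u c‖ ^ 2 :=
      inner_self_eq_norm_sq (𝕜 := ℂ) _
    linarith [hβ.nonneg c]
  have hbd : ∀ c d, ‖form α c d‖ ≤ ‖orb σ u c‖ * ‖orb σ u d‖ := by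
    intro c d
    refine le_of_sq_le_sq ?_ (by positivity) 
    calc _ = ‖form α c d‖ * ‖form α c d‖ := by ring
      _ ≤ _ := form_cs hα c d
      _ ≤ ‖orb σ u c‖ ^ 2 * ‖orb σ u d‖ ^ 2 :=
        mul_le_mul (hle c) (hle d) (hα.nonneg d) (by positivity)
      _ = _ := by ring
  have heq : ∀ c d, (form α c).extendOfNorm (orb σ u) (orb σ u d) = form α c d := fun c d =>
    LinearMap.extendOfNorm_eq hd ⟨‖orb σ u c‖, hbd c⟩ d
  have hext : ∀ f g : E →L[ℂ] ℂ, (∀ d, f (orb σ u d) = g (orb σ u d)) → f = g := by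
    intro f g h
    ext x
    exact congrFun (hd.equalizer f.continuous g.continuous (funext h)) x
  let B1 : (G →₀ ℂ) →ₗ⋆[ℂ] (E →L[ℂ] ℂ) :=
    { toFun := fun c => (form α c).extendOfNorm (orb σ u)
      map_add' := fun c d => hext _ _ fun e => by
        rw [heq]; simp [heq]
      map_smul' := fun r c => hext _ _ fun e => by
        rw [heq]; simp [heq] }
  have hB1 : ∀ c d, B1 c (orb σ u d) = form α c d := heq
  have hB1n : ∀ c, ‖B1 c‖ ≤ 1 * ‖orb σ u c‖ := fun c => by
    rw [one_mul]
    exact LinearMap.opNorm_extendOfNorm_le hd (norm_nonneg _) (hbd c)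
  let B : E →L⋆[ℂ] E →L[ℂ] ℂ := B1.extendOfNorm (orb σ u)
  have hB : ∀ c d, B (orb σ u c) (orb σ u d) = form α c d := by
    intro c d
    have : B (orb σ u c) = B1 c := LinearMap.extendOfNorm_eq hd ⟨1, hB1n⟩ c
    rw [this, hB1]
  let T : E →L[ℂ] E := InnerProductSpace.continuousLinearMapOfBilin B
  have hT : ∀ c d, inner ℂ (T (orb σ u c)) (orb σ u d) = form α c d := by
    intro c d
    rw [← hB]
    exact InnerProductSpace.continuousLinearMapOfBilin_apply B _ _
  have hs : ∀ k, orb σ u (Finsupp.single k 1) = σ k u := fun k => by simp [orb]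
  have hTs : ∀ g h, inner ℂ (T (σ g u)) (σ h u) = α (h⁻¹ * g) := by
    intro g h
    rw [← hs, ← hs, hT, form_single]
    simp
  -- two vectors with the same inner products with the orbit are equal
  have hvec : ∀ x y : E, (∀ h, inner ℂ x (σ h u) = inner ℂ y (σ h u)) → x = y := by
    intro x y h
    have : innerSL ℂ x = innerSL ℂ y := by
      refine hext _ _ fun d => ?_
      simp only [innerSL_apply_apply, orb, Finsupp.linearCombination_apply, Finsupp.sum, inner_sum,
        inner_smul_right, h]
    refine ext_inner_right ℂ fun z => ?_
    exact congrArg (fun f : E →L[ℂ] ℂ => f z) this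
  -- two operators that agree on the orbit are equal
  have hop : ∀ S S' : E →L[ℂ] E, (∀ h, S (σ h u) = S' (σ h u)) → S = S' := by
    intro S S' h
    ext x
    refine congrFun (hd.equalizer S.continuous S'.continuous (funext fun d => ?_)) x
    simp only [Function.comp, orb, Finsupp.linearCombination_apply, Finsupp.sum, map_sum, map_smul, h]
  have hcomm : ∀ k x, T (σ k x) = σ k (T x) := by
    intro k x
    have : T ∘L (σ k : E →L[ℂ] E) = (σ k : E →L[ℂ] E) ∘L T := by
      refine hop _ _ fun g => hvec _ _ fun h => ?_
      show inner ℂ (T (σ k (σ g u))) (σ h u) = inner ℂ (σ k (T (σ g u))) (σ h u)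
      have e1 : σ k (σ g u) = σ (k * g) u := by rw [map_mul]; rfl
      have e2 : σ h u = σ k (σ (k⁻¹ * h) u) := by
        rw [rep_mul, mul_inv_cancel_left]
      rw [e1, hTs, e2, (σ k).inner_map_map, hTs]
      congr 1
      group
    exact congrArg (fun S : E →L[ℂ] E => S x) this
  have hsa : IsSelfAdjoint T := by
    rw [ContinuousLinearMap.isSelfAdjoint_iff']
    refine hop _ _ fun g => hvec _ _ fun h => ?_
    rw [ContinuousLinearMap.adjoint_inner_left, hTs, ← inner_conj_symm, hTs, ← hα.herm]
    simp
  obtain ⟨l, hl⟩ := schur σ hσirr T hsa hcomm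
  have h1 : ∀ g, α g = conj l * coef σ u g := by
    intro g
    have := hTs g 1
    rw [hl, inner_smul_left] at this
    simpa [coef] using this.symm
  have h2 : coef σ u 1 = 1 := by simp [coef, hu]
  rw [h1 g, h1 1, h2, mul_one]

/-- Asymptotic extremality. -/
lemma asymp (σ : G →* (E ≃ₗᵢ[ℂ] E))
    (hσirr : Nontrivial E ∧
      ∀ p : Submodule ℂ E, IsClosed (p : Set E) →
        (∀ g : G, ∀ v ∈ p, σ g v ∈ p) → p = ⊥ ∨ p = ⊤)
    (u : E) (hu : ‖u‖ = 1) (α β : ℕ → G → ℂ) (hα : ∀ k, PD (α k)) (hβ : ∀ k, PD (β k))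
    (hb : ∀ k g, ‖α k g‖ ≤ 1)
    (hab : ∀ g, Tendsto (fun k => α k g + β k g) atTop (𝓝 (coef σ u g))) (g : G) :
    Tendsto (fun k => α k g - α k 1 * coef σ u g) atTop (𝓝 0) := by
  rw [tendsto_iff_ultrafilter]
  intro F hF
  have hlim : ∀ g, ∃ a, Tendsto (fun k => α k g) F (𝓝 a) := by
    intro g
    have hc := isCompact_closedBall (0 : ℂ) 1
    obtain ⟨a, -, ha⟩ := hc.ultrafilter_le_nhds (F.map fun k => α k g) (by
      rw [Ultrafilter.coe_map, le_principal_iff, mem_map]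
      exact univ_mem' fun k => by simpa using hb k g)
    exact ⟨a, ha⟩
  choose a ha using hlim
  have hbl : ∀ g, Tendsto (fun k => β k g) F (𝓝 (coef σ u g - a g)) := by
    intro g
    have := ((hab g).mono_left hF).sub (ha g)
    simpa using this
  have := extremal σ hσirr u hu a (fun g => coef σ u g - a g) (PD_lim (F : Filter ℕ) α a hα ha)
    (PD_lim (F : Filter ℕ) β _ hβ hbl) (by simp) g
  have h3 := (ha g).sub ((ha 1).mul_const (coef σ u g))
  rw [← this, sub_self] at h3
  exact h3

end irr
open MeasureTheory in
lemma exists_W {G : Type*} [TopologicalSpace G] [Group G] [IsTopologicalGroup G]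
    [LocallyCompactSpace G] [T2Space G] [SecondCountableTopology G]
    (V : Set G) (hV : IsCompact V) (hV1 : V ∈ 𝓝 (1 : G)) :
    ∃ W ∈ 𝓝 (1 : G), ∀ (m : ℕ) (t : Fin m → ℝ) (r : Fin m → G → ℝ) (η : ℝ) (bad : Finset (Fin m)),
      0 < η → (∀ j, 0 ≤ t j) → (∀ j, Continuous (r j)) → (∀ j x, 0 ≤ r j x) →
      (∀ x ∈ V, ∑ j, t j * r j x ≤ η / 16) →
      (∀ j ∈ bad, ∃ y ∈ W, ∀ a b, r j a ≤ η → r j b ≤ η → y ≠ a * b⁻¹) →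
      ∑ j ∈ bad, t j ≤ 1 / 4 := by
  let _ : MeasurableSpace G := borel G
  have : BorelSpace G := ⟨rfl⟩
  let μ : Measure G := Measure.haar
  have hfin : μ V < ⊤ := hV.measure_lt_top
  have hpos : 0 < μ V := by
    have := isOpen_interior (s := V) |>.measure_pos μ ⟨1, mem_interior_iff_mem_nhds.2 hV1⟩
    exact this.trans_le (measure_mono interior_subset)
  have hposr : 0 < μ.real V := ENNReal.toReal_pos hpos.ne' hfin.ne
  obtain ⟨U, hVU, hUo, hU⟩ := hV.exists_isOpen_lt_add (μ := μ)
    (ε := ENNReal.ofReal (μ.real V / 4)) (by simpa using hposr)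
  have hUfin : μ U < ⊤ := hU.trans (ENNReal.add_lt_top.2 ⟨hfin, ENNReal.ofReal_lt_top⟩)
  have hUr : μ.real U < μ.real V + μ.real V / 4 := by
    have := (ENNReal.toReal_lt_toReal hUfin.ne
      (ENNReal.add_lt_top.2 ⟨hfin, ENNReal.ofReal_lt_top⟩).ne).2 hU
    rw [ENNReal.toReal_add hfin.ne ENNReal.ofReal_lt_top.ne, ENNReal.toReal_ofReal (by positivity)]
      at this
    exact this
  obtain ⟨W, hW, hWV⟩ := compact_open_separated_mul_left hV hUo hVU
  refine ⟨W, hW, ?_⟩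
  intro m t r η bad hη ht hrc hr0 hsum hbad
  -- each bad index has a large integral
  have hint : ∀ j, IntegrableOn (r j) V μ := fun j => (hrc j).continuousOn.integrableOn_compact hV
  have hbig : ∀ j ∈ bad, η * (μ.real V / 4) ≤ ∫ x in V, r j x ∂μ := by
    intro j hj
    obtain ⟨y, hy, hyab⟩ := hbad j hj
    let A : Set G := V ∩ {x | r j x < η}
    have hAm : MeasurableSet A :=
      hV.measurableSet.inter (measurableSet_lt (hrc j).measurable measurable_const)
    have hAV : A ⊆ V := Set.inter_subset_left
    have hyA : (Set.image (fun x => y * x) A) ⊆ U := by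
      rintro _ ⟨x, hx, rfl⟩
      exact hWV (Set.mul_mem_mul hy (hAV hx))
    have hdisj : Disjoint A ((Set.image (fun x => y * x) A)) := by
      rw [Set.disjoint_left]
      rintro _ hx ⟨b, hb, rfl⟩
      exact hyab (y * b) b hx.2.le hb.2.le (by simp)
    have hyAμ : μ ((Set.image (fun x => y * x) A)) = μ A := by
      rw [Set.image_mul_left, measure_preimage_mul]
    have hAr : μ.real A + μ.real A ≤ μ.real U := by
      have h1 : μ.real (A ∪ (Set.image (fun x => y * x) A)) = μ.real A + μ.real A := by
        rw [measureReal_union' hdisj hAm (((measure_mono hAV).trans_lt hfin).ne)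
          (((measure_mono hyA).trans_lt hUfin).ne)]
        congr 1
        rw [measureReal_def, hyAμ, measureReal_def]
      rw [← h1]
      exact measureReal_mono (Set.union_subset (hAV.trans hVU) hyA) hUfin.ne
    have hmarkov := mul_meas_ge_le_integral_of_nonneg (μ := μ.restrict V) (f := r j)
      (ae_of_all _ (hr0 j)) (hint j) η
    have hge : (μ.restrict V).real {x | η ≤ r j x} = μ.real V - μ.real A := by
      rw [measureReal_restrict_apply (measurableSet_le measurable_const (hrc j).measurable)]
      rw [← measureReal_sdiff hAV hAm hfin.ne]
      congr 1
      ext x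
      simp only [A, Set.mem_inter_iff, Set.mem_ofPred_eq, Set.mem_sdiff, not_and, not_lt]
      tauto
    rw [hge] at hmarkov
    refine le_trans ?_ hmarkov
    exact mul_le_mul_of_nonneg_left (by linarith) hη.le
  have htot : ∑ j, t j * ∫ x in V, r j x ∂μ ≤ η / 16 * μ.real V := by
    have h1 : ∑ j, t j * ∫ x in V, r j x ∂μ = ∫ x in V, ∑ j, t j * r j x ∂μ := by
      rw [integral_finsetSum _ fun j _ => (hint j).const_mul _]
      simp only [integral_const_mul]
    rw [h1]
    calc _ ≤ ∫ x in V, η / 16 ∂μ := by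
          refine setIntegral_mono_on ?_ (integrableOn_const hfin.ne) hV.measurableSet hsum
          exact integrable_finsetSum _ fun j _ => (hint j).const_mul _
      _ = _ := by simp [mul_comm]
  have hsub : ∑ j ∈ bad, t j * (η * (μ.real V / 4)) ≤ η / 16 * μ.real V := by
    refine le_trans ?_ htot
    refine (Finset.sum_le_sum fun j hj => mul_le_mul_of_nonneg_left (hbig j hj) (ht j)).trans ?_
    refine Finset.sum_le_sum_of_subset_of_nonneg (Finset.subset_univ _) fun j _ _ => ?_
    exact mul_nonneg (ht j) (integral_nonneg (hr0 j))
  rw [← Finset.sum_mul] at hsub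
  have hp : 0 < η * μ.real V := by positivity
  by_contra hcon
  push Not at hcon
  nlinarith

section main
variable {G : Type*} [Group G] {E : Type*} [NormedAddCommGroup E] [InnerProductSpace ℂ E]

lemma coef_one (ρ : G →* (E ≃ₗᵢ[ℂ] E)) (v : E) (hv : ‖v‖ = 1) : coef ρ v 1 = 1 := by
  simp [coef, hv]

lemma norm_coef_le (ρ : G →* (E ≃ₗᵢ[ℂ] E)) (v : E) (hv : ‖v‖ = 1) (g : G) : ‖coef ρ v g‖ ≤ 1 := by
  have := norm_inner_le_norm (𝕜 := ℂ) (ρ g v) v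
  rw [LinearIsometryEquiv.norm_map, hv, mul_one] at this
  exact this

lemma norm_sub_sq_coef (ρ : G →* (E ≃ₗᵢ[ℂ] E)) (v : E) (hv : ‖v‖ = 1) (g : G) :
    ‖ρ g v - v‖ ^ 2 = 2 * (1 - (coef ρ v g).re) := by
  have := norm_sub_sq (𝕜 := ℂ) (ρ g v) v
  rw [this, LinearIsometryEquiv.norm_map, hv, coef]
  simp only [RCLike.re_to_complex]
  ring

lemma norm_coef_sub_le (ρ : G →* (E ≃ₗᵢ[ℂ] E)) (v : E) (hv : ‖v‖ = 1) (g h : G) :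
    ‖coef ρ v g - coef ρ v h‖ ≤ ‖ρ (h⁻¹ * g) v - v‖ := by
  have h1 : coef ρ v g - coef ρ v h = inner ℂ (ρ g v - ρ h v) v := by
    rw [inner_sub_left]; rfl
  have h2 : ρ g v - ρ h v = ρ h (ρ (h⁻¹ * g) v - v) := by
    rw [map_sub, rep_mul, mul_inv_cancel_left]
  rw [h1]
  refine (norm_inner_le_norm (𝕜 := ℂ) _ _).trans ?_
  rw [hv, mul_one, h2, LinearIsometryEquiv.norm_map]

lemma norm_mul_inv_le (ρ : G →* (E ≃ₗᵢ[ℂ] E)) (v : E) (a b : G) :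
    ‖ρ (a * b⁻¹) v - v‖ ≤ ‖ρ a v - v‖ + ‖ρ b v - v‖ := by
  have h1 : ρ (a * b⁻¹) v - v = ρ (a * b⁻¹) (v - ρ b v) + (ρ a v - v) := by
    rw [map_sub, rep_mul, inv_mul_cancel_right]; abel
  rw [h1, add_comm ‖ρ a v - v‖, norm_sub_rev (ρ b v) v]
  refine (norm_add_le _ _).trans ?_
  rw [LinearIsometryEquiv.norm_map]

lemma exists_dir (z : ℂ) (e : ℝ) (hz : 3 / 4 * e ≤ ‖z‖) (he : 0 < e) :
    ∃ i : Fin 4, e / 4 ≤ ((![1, -1, Complex.I, -Complex.I] : Fin 4 → ℂ) i * z).re := by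
  have h := Complex.norm_le_abs_re_add_abs_im z
  by_contra hcon
  push Not at hcon
  have h0 := hcon 0
  have h1 := hcon 1
  have h2 := hcon 2
  have h3 := hcon 3
  simp at h0 h1 h2 h3
  have := abs_lt.2 ⟨by linarith, h0⟩
  have := abs_lt.2 ⟨by linarith, h3⟩
  linarith

lemma norm_dir (i : Fin 4) : ‖(![1, -1, Complex.I, -Complex.I] : Fin 4 → ℂ) i‖ = 1 := by
  fin_cases i <;> simp

end main

lemma sum_biUnion_le {ι κ : Type*} [DecidableEq ι] [DecidableEq κ] (s : Finset κ)
    (J : κ → Finset ι) (t : ι → ℝ) (ht : ∀ i, 0 ≤ t i) :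
    ∑ i ∈ s.biUnion J, t i ≤ ∑ p ∈ s, ∑ i ∈ J p, t i := by
  induction s using Finset.induction_on with
  | empty => simp
  | insert a s ha ih =>
    rw [Finset.biUnion_insert, Finset.sum_insert ha]
    have := Finset.sum_union_inter (s₁ := J a) (s₂ := s.biUnion J) (f := t)
    have h2 : 0 ≤ ∑ i ∈ J a ∩ s.biUnion J, t i := Finset.sum_nonneg fun i _ => ht i
    linarith

lemma approx
    {G : Type*} [TopologicalSpace G] [Group G] [IsTopologicalGroup G]
    [LocallyCompactSpace G] [T2Space G] [SecondCountableTopology G]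
    {H : ℕ → Type*} [∀ n, NormedAddCommGroup (H n)] [∀ n, InnerProductSpace ℂ (H n)]
    (π : ∀ n, G →* (H n ≃ₗᵢ[ℂ] H n))
    (hπcont : ∀ (n : ℕ) (v : H n), Continuous fun g : G => π n g v)
    {E : Type*} [NormedAddCommGroup E] [InnerProductSpace ℂ E] [CompleteSpace E]
    (σ : G →* (E ≃ₗᵢ[ℂ] E))
    (hσcont : ∀ v : E, Continuous fun g : G => σ g v)
    (hσirr : Nontrivial E ∧
      ∀ p : Submodule ℂ E, IsClosed (p : Set E) →
        (∀ g : G, ∀ v ∈ p, σ g v ∈ p) → p = ⊥ ∨ p = ⊤)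
    (u : E) (hu : ‖u‖ = 1)
    (hweak : ∀ C : Set G, IsCompact C → ∀ ε : ℝ, 0 < ε →
      ∃ (m : ℕ) (idx : Fin m → ℕ) (w : ∀ j : Fin m, H (idx j)) (t : Fin m → ℝ),
        (∀ j, ‖w j‖ = 1) ∧ (∀ j, 0 ≤ t j) ∧ (∑ j, t j = 1) ∧
        ∀ g ∈ C, ‖coef σ u g - ∑ j, (t j : ℂ) * coef (π (idx j)) (w j) g‖ < ε)
    (C : Set G) (hC : IsCompact C) (ε : ℝ) (hε : 0 < ε) :
    ∃ (n : ℕ) (v : H n), ‖v‖ = 1 ∧ ∀ g ∈ C, ‖coef (π n) v g - coef σ u g‖ < ε := by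
  classical
  by_contra hno
  push Not at hno
  let K : CompactExhaustion G := default
  choose m idx w t hw ht hsum happ using fun k : ℕ =>
    hweak (K k) (K.isCompact k) (1 / ((k : ℝ) + 1)) (by positivity)
  have hφc : Continuous (coef σ u) := (hσcont u).inner continuous_const
  have htend : ∀ g, Tendsto (fun k => ∑ j, (t k j : ℂ) * coef (π (idx k j)) (w k j) g) atTop
      (𝓝 (coef σ u g)) := by
    intro g
    rw [tendsto_iff_norm_sub_tendsto_zero]
    obtain ⟨N, hN⟩ := K.exists_superset_of_isCompact (isCompact_singleton (x := g))
    refine squeeze_zero' (Eventually.of_forall fun k => norm_nonneg _) ?_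
      tendsto_one_div_add_atTop_nhds_zero_nat
    filter_upwards [eventually_ge_atTop N] with k hk
    rw [norm_sub_rev]
    exact (happ k g (K.subset hk (hN rfl))).le
  -- sub-convex combinations
  have hJ : ∀ g, ∀ θ : ℝ, 0 < θ → ∀ᶠ k in atTop, ∀ J : Finset (Fin (m k)),
      ‖∑ j ∈ J, (t k j : ℂ) * (coef (π (idx k j)) (w k j) g - coef σ u g)‖ < θ := by
    intro g θ hθ
    have hex : ∀ k, ∃ J : Finset (Fin (m k)),
        ‖∑ j ∈ J, (t k j : ℂ) * (coef (π (idx k j)) (w k j) g - coef σ u g)‖ < θ →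
        ∀ J : Finset (Fin (m k)),
      ‖∑ j ∈ J, (t k j : ℂ) * (coef (π (idx k j)) (w k j) g - coef σ u g)‖ < θ := by
      intro k
      by_contra hcon
      push Not at hcon
      obtain ⟨h1, J, h2⟩ := hcon ∅
      exact absurd (hcon J).1 (not_lt.2 h2)
    choose J hJ using hex
    have := asymp σ hσirr u hu
      (fun k g => ∑ j ∈ J k, (t k j : ℂ) * coef (π (idx k j)) (w k j) g)
      (fun k g => ∑ j ∈ (J k)ᶜ, (t k j : ℂ) * coef (π (idx k j)) (w k j) g)
      (fun k => PD_sum _ _ (ht k) (fun j => coef (π (idx k j)) (w k j)) fun j => PD_coef _ _)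
      (fun k => PD_sum _ _ (ht k) (fun j => coef (π (idx k j)) (w k j)) fun j => PD_coef _ _)
      (by
        intro k g
        refine (norm_sum_le _ _).trans ?_
        rw [← hsum k]
        refine le_trans (Finset.sum_le_sum (g := fun j => t k j) fun j _ => ?_)
          (Finset.sum_le_sum_of_subset_of_nonneg (Finset.subset_univ _) fun j _ _ => ht k j)
        rw [norm_mul, Complex.norm_real, Real.norm_of_nonneg (ht k j)]
        exact mul_le_of_le_one_right (ht k j) (norm_coef_le _ _ (hw k j) g))
      (by
        intro g
        simp only [Finset.sum_add_sum_compl]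
        exact htend g) g
    have h2 := (tendsto_zero_iff_norm_tendsto_zero.1 this).eventually (gt_mem_nhds hθ)
    filter_upwards [h2] with k hk
    refine hJ k ?_
    refine lt_of_eq_of_lt (congrArg norm ?_) hk
    rw [Finset.sum_mul, ← Finset.sum_sub_distrib]
    refine Finset.sum_congr rfl fun j _ => ?_
    rw [coef_one _ _ (hw k j)]
    ring
  -- constants
  let κ : ℝ := ε / 16
  have hκ : 0 < κ := by positivity
  obtain ⟨V, hV1, hVs, hV⟩ : ∃ V ∈ 𝓝 (1 : G),
      V ⊆ {g | 2 * (1 - (coef σ u g).re) < κ ^ 2 / 32} ∧ IsCompact V := by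
    apply LocallyCompactSpace.local_compact_nhds
    have hc : Continuous fun g => 2 * (1 - (coef σ u g).re) := by fun_prop
    refine hc.continuousAt.eventually (gt_mem_nhds ?_)
    show 2 * (1 - (coef σ u 1).re) < κ ^ 2 / 32
    rw [coef_one _ _ hu]
    simp only [Complex.one_re, sub_self, mul_zero]
    positivity
  obtain ⟨W, hW, hWp⟩ := exists_W V hV hV1
  obtain ⟨F, hFC, hF⟩ := hC.elim_nhds_subcover
    (fun g => {h | g⁻¹ * h ∈ W ∧ ‖coef σ u h - coef σ u g‖ < ε / 8}) (by
      intro g _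
      refine inter_mem ?_ ?_
      · have : ContinuousAt (fun h : G => g⁻¹ * h) g := by fun_prop
        exact this (by simpa using hW)
      · have hc : Continuous fun h => ‖coef σ u h - coef σ u g‖ := by fun_prop
        exact hc.continuousAt.eventually (gt_mem_nhds (by simpa using hε)))
  let θ : ℝ := ε / (32 * ((F.card : ℝ) + 1))
  have hθ : 0 < θ := by positivity
  have hFev : ∀ᶠ k in atTop, ∀ g ∈ F, ∀ J : Finset (Fin (m k)),
      ‖∑ j ∈ J, (t k j : ℂ) * (coef (π (idx k j)) (w k j) g - coef σ u g)‖ < θ :=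
    (Filter.eventually_all_finset F).2 fun g _ => hJ g θ hθ
  obtain ⟨N, hN⟩ := K.exists_superset_of_isCompact hV
  have hsmall : ∀ᶠ k : ℕ in atTop, 1 / ((k : ℝ) + 1) < κ ^ 2 / 64 :=
    tendsto_one_div_add_atTop_nhds_zero_nat.eventually (gt_mem_nhds (by positivity))
  obtain ⟨k, hkF, hkN, hks⟩ := (hFev.and ((eventually_ge_atTop N).and hsmall)).exists
  -- the functions r
  let r : Fin (m k) → G → ℝ := fun j x => ‖π (idx k j) x (w k j) - w k j‖ ^ 2
  have hrsum : ∀ x ∈ V, ∑ j, t k j * r j x ≤ κ ^ 2 / 16 := by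
    intro x hx
    have h1 : ∑ j, t k j * r j x =
        2 * (1 - (∑ j, (t k j : ℂ) * coef (π (idx k j)) (w k j) x).re) := by
      simp only [r, norm_sub_sq_coef _ _ (hw k _), Complex.re_sum, Complex.re_ofReal_mul]
      rw [← hsum k, ← Finset.sum_sub_distrib, Finset.mul_sum]
      refine Finset.sum_congr rfl fun j _ => ?_
      rw [hsum k]
      ring
    have h2 := (Complex.abs_re_le_norm _).trans (happ k x (K.subset hkN (hN hx))).le
    rw [Complex.sub_re] at h2
    have h3 := (abs_le.1 h2).2
    have h4 : 2 * (1 - (coef σ u x).re) < κ ^ 2 / 32 := hVs hx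
    rw [h1]
    linarith
  let bad : Finset (Fin (m k)) := Finset.univ.filter fun j =>
    ∃ y ∈ W, ∀ a b, r j a ≤ κ ^ 2 → r j b ≤ κ ^ 2 → y ≠ a * b⁻¹
  have hbad : ∑ j ∈ bad, t k j ≤ 1 / 4 := by
    refine hWp (m k) (t k) r (κ ^ 2) bad (by positivity) (ht k) ?_ ?_ hrsum ?_
    · intro j
      have := hπcont (idx k j) (w k j)
      fun_prop
    · intro j x; positivity
    · intro j hj
      exact (Finset.mem_filter.1 hj).2
  let dir : Fin 4 → ℂ := ![1, -1, Complex.I, -Complex.I]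
  let J : G × Fin 4 → Finset (Fin (m k)) := fun p => Finset.univ.filter fun j =>
    ε / 4 ≤ (dir p.2 * (coef (π (idx k j)) (w k j) p.1 - coef σ u p.1)).re
  have hgood : badᶜ ⊆ (F ×ˢ Finset.univ).biUnion J := by
    intro j hj
    simp only [bad, Finset.compl_filter, Finset.mem_filter, Finset.mem_univ, true_and] at hj
    push Not at hj
    obtain ⟨g, hgC, hg⟩ := hno (idx k j) (w k j) (hw k j)
    obtain ⟨h, hhF, hh⟩ := Set.mem_iUnion₂.1 (hF hgC)
    obtain ⟨hh1, hh2⟩ := hh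
    obtain ⟨a, b, ha, hb, hab⟩ := hj _ hh1
    have ha' : ‖π (idx k j) a (w k j) - w k j‖ ≤ κ := le_of_sq_le_sq ha hκ.le
    have hb' : ‖π (idx k j) b (w k j) - w k j‖ ≤ κ := le_of_sq_le_sq hb hκ.le
    have h1 := norm_coef_sub_le (π (idx k j)) (w k j) (hw k j) g h
    rw [hab] at h1
    have h2 := h1.trans (norm_mul_inv_le _ _ _ _)
    have h3 : ‖coef (π (idx k j)) (w k j) g - coef (π (idx k j)) (w k j) h‖ ≤ ε / 8 := by
      have : κ = ε / 16 := rfl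
      linarith
    have h4 : 3 / 4 * ε ≤ ‖coef (π (idx k j)) (w k j) h - coef σ u h‖ := by
      have e : coef (π (idx k j)) (w k j) g - coef σ u g =
        (coef (π (idx k j)) (w k j) g - coef (π (idx k j)) (w k j) h) +
        (coef (π (idx k j)) (w k j) h - coef σ u h) - (coef σ u g - coef σ u h) := by ring
      rw [e] at hg
      have h5 := hg.trans (norm_sub_le _ _)
      have h6 := norm_add_le (coef (π (idx k j)) (w k j) g - coef (π (idx k j)) (w k j) h)
        (coef (π (idx k j)) (w k j) h - coef σ u h)
      linarith
    obtain ⟨i, hi⟩ := exists_dir _ ε h4 hε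
    rw [Finset.mem_biUnion]
    exact ⟨(h, i), by simpa using hhF, by simpa [J] using hi⟩
  have hmass : ∀ p ∈ F ×ˢ (Finset.univ : Finset (Fin 4)), ∑ j ∈ J p, t k j ≤ 4 * θ / ε := by
    intro p hp
    have h1 := hkF p.1 (Finset.mem_product.1 hp).1 (J p)
    have h2 : (∑ j ∈ J p, t k j) * (ε / 4) ≤
        (dir p.2 * ∑ j ∈ J p, (t k j : ℂ) * (coef (π (idx k j)) (w k j) p.1 - coef σ u p.1)).re := by
      rw [Finset.mul_sum, Complex.re_sum, Finset.sum_mul]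
      refine Finset.sum_le_sum fun j hj => ?_
      rw [mul_left_comm, Complex.re_ofReal_mul]
      exact mul_le_mul_of_nonneg_left (Finset.mem_filter.1 hj).2 (ht k j)
    have h3 := h2.trans (Complex.re_le_norm _)
    rw [norm_mul, norm_dir, one_mul] at h3
    rw [le_div_iff₀ hε]
    linarith
  have hfinal : ∑ j ∈ badᶜ, t k j ≤ 1 / 2 := by
    calc ∑ j ∈ badᶜ, t k j ≤ ∑ j ∈ (F ×ˢ Finset.univ).biUnion J, t k j :=
          Finset.sum_le_sum_of_subset_of_nonneg hgood fun j _ _ => ht k j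
      _ ≤ ∑ p ∈ F ×ˢ (Finset.univ : Finset (Fin 4)), ∑ j ∈ J p, t k j :=
          sum_biUnion_le _ _ _ (ht k)
      _ ≤ ∑ p ∈ F ×ˢ (Finset.univ : Finset (Fin 4)), 4 * θ / ε := Finset.sum_le_sum hmass
      _ = (F.card * 4 : ℝ) * (4 * θ / ε) := by simp
      _ ≤ 1 / 2 := by
          have e : 4 * θ / ε = 1 / (8 * ((F.card : ℝ) + 1)) := by
            simp only [θ]; field_simp; norm_num
          rw [e, mul_one_div, div_le_div_iff₀ (by positivity) (by norm_num)]
          linarith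
  have := Finset.sum_add_sum_compl bad (t k)
  rw [hsum k] at this
  linarith

end WCL

/-- **Proposition B.4.**
Let `G` be a locally compact Hausdorff second-countable topological group, `(πₙ, Hₙ)` a
sequence of irreducible unitary representations of `G`, and `(σ, E)` an irreducible unitary
representation of `G` weakly contained in the Hilbert direct sum of the `πₙ` (expressed via
uniform approximation of normalized matrix coefficients on compact sets by convex combinations
of normalized matrix coefficients of the `πₙ`).  Then `σ` is a limit of a subsequence of
`(πₙ)`: every normalized matrix coefficient of `σ` is a uniform limit, on every compact subset
of `G`, of a sequence of normalized matrix coefficients of the `π_{n_k}`. -/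
theorem weak_containment_limit_of_subsequence
    {G : Type*} [TopologicalSpace G] [Group G] [IsTopologicalGroup G]
    [LocallyCompactSpace G] [T2Space G] [SecondCountableTopology G]
    {H : ℕ → Type*} [∀ n, NormedAddCommGroup (H n)] [∀ n, InnerProductSpace ℂ (H n)]
    [∀ n, CompleteSpace (H n)]
    (π : ∀ n, G →* (H n ≃ₗᵢ[ℂ] H n))
    (hπcont : ∀ (n : ℕ) (v : H n), Continuous fun g : G => π n g v)
    (hπirr : ∀ n : ℕ, Nontrivial (H n) ∧
      ∀ p : Submodule ℂ (H n), IsClosed (p : Set (H n)) →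
        (∀ g : G, ∀ v ∈ p, π n g v ∈ p) → p = ⊥ ∨ p = ⊤)
    {E : Type*} [NormedAddCommGroup E] [InnerProductSpace ℂ E] [CompleteSpace E]
    (σ : G →* (E ≃ₗᵢ[ℂ] E))
    (hσcont : ∀ v : E, Continuous fun g : G => σ g v)
    (hσirr : Nontrivial E ∧
      ∀ p : Submodule ℂ E, IsClosed (p : Set E) →
        (∀ g : G, ∀ v ∈ p, σ g v ∈ p) → p = ⊥ ∨ p = ⊤)
    (hweak : ∀ u : E, ‖u‖ = 1 → ∀ C : Set G, IsCompact C → ∀ ε : ℝ, 0 < ε →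
      ∃ (m : ℕ) (idx : Fin m → ℕ) (w : ∀ j : Fin m, H (idx j)) (t : Fin m → ℝ),
        (∀ j, ‖w j‖ = 1) ∧ (∀ j, 0 ≤ t j) ∧ (∑ j, t j = 1) ∧
        ∀ g ∈ C,
          ‖(inner ℂ (σ g u) u : ℂ) -
            ∑ j, (t j : ℂ) * (inner ℂ (π (idx j) g (w j)) (w j) : ℂ)‖ < ε) :
    ∀ u : E, ‖u‖ = 1 →
      ∃ (idx : ℕ → ℕ) (v : ∀ k : ℕ, H (idx k)),
        (∀ k, ‖v k‖ = 1) ∧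
        ∀ C : Set G, IsCompact C →
          TendstoUniformlyOn (fun (k : ℕ) (g : G) => (inner ℂ (π (idx k) g (v k)) (v k) : ℂ))
            (fun g : G => (inner ℂ (σ g u) u : ℂ)) atTop C := by
  intro u hu
  let K : CompactExhaustion G := default
  choose idx v hv hvC using fun k : ℕ =>
    WCL.approx π hπcont σ hσcont hσirr u hu (hweak u hu) (K k) (K.isCompact k)
      (1 / ((k : ℝ) + 1)) (by positivity)
  refine ⟨idx, v, hv, fun C hC => ?_⟩
  rw [Metric.tendstoUniformlyOn_iff]
  intro ε hε
  obtain ⟨N, hN⟩ := K.exists_superset_of_isCompact hC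
  filter_upwards [eventually_ge_atTop N,
    tendsto_one_div_add_atTop_nhds_zero_nat.eventually (gt_mem_nhds hε)] with k hk hkε g hg
  rw [dist_comm, dist_eq_norm]
  exact (hvC k g (K.subset hk (hN hg))).trans hkε
end

section
/- Let G be a locally compact Hausdorff, second-countable topological group. Let (πₙ, Hₙ), for n ∈ ℕ, be irreducible unitary representations of G and let (σ, H) be an irreducible unitary representation of G. Assume: (a) σ is weakly contained in the Hilbert direct sum of the πₙ, i.e., for every unit vector u ∈ H, every compact C ⊆ G and every ε > 0 there are finitely many indices n₁, …, n_m, unit vectors wⱼ ∈ H_{nⱼ} and nonnegative reals tⱼ summing to 1 with |⟪σ(g)u, u⟫ − Σⱼ tⱼ·⟪π_{nⱼ}(g)wⱼ, wⱼ⟫| < ε for all g ∈ C; and (b) σ is isolated among Fell limits, i.e., whenever (ρ_k, E_k) is a sequence of irreducible unitary representations of G and w_k ∈ E_k are unit vectors such that g ↦ ⟪ρ_k(g)w_k, w_k⟫ converges uniformly on compact subsets of G to a normalized matrix coefficient g ↦ ⟪σ(g)u, u⟫ of σ (u a unit vector of H), then some ρ_k is unitarily equivalent to σ. Then there exists an index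 i such that πᵢ is unitarily equivalent to σ. -/
open Filter Topology
universe u

set_option linter.unusedSectionVars false

namespace WeakCont
open ComplexConjugate

variable {G : Type*} [Group G] {E : Type*} [NormedAddCommGroup E] [InnerProductSpace ℂ E]

/-- The linear map `a ↦ ∑ a g • σ g v`. -/
noncomputable def L (σ : G →* (E ≃ₗᵢ[ℂ] E)) (v : E) : (G →₀ ℂ) →ₗ[ℂ] E :=
  Finsupp.linearCombination ℂ (fun g => σ g v)

/-- The sesquilinear form attached to a function on the group. -/
noncomputable def Q (f : G → ℂ) (a b : G →₀ ℂ) : ℂ :=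
  a.sum fun g x => b.sum fun h y => conj x * y * f (h⁻¹ * g)

theorem L_apply (σ : G →* (E ≃ₗᵢ[ℂ] E)) (v : E) (a : G →₀ ℂ) :
    L σ v a = a.sum fun g x => x • σ g v := rfl

theorem L_single (σ : G →* (E ≃ₗᵢ[ℂ] E)) (v : E) (g : G) (x : ℂ) :
    L σ v (Finsupp.single g x) = x • σ g v := by simp [L]

theorem rep_mul (σ : G →* (E ≃ₗᵢ[ℂ] E)) (g h : G) (v : E) :
    σ g (σ h v) = σ (g * h) v := by rw [map_mul]; rfl

theorem inner_shift (σ : G →* (E ≃ₗᵢ[ℂ] E)) (v w : E) (g h : G) :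
    inner ℂ (σ g v) (σ h w) = inner ℂ (σ (h⁻¹ * g) v) w := by
  rw [← LinearIsometryEquiv.inner_map_map (σ h) (σ (h⁻¹ * g) v) w]
  rw [rep_mul]
  simp

theorem inner_L (σ : G →* (E ≃ₗᵢ[ℂ] E)) (v w : E) (a b : G →₀ ℂ) :
    inner ℂ (L σ v a) (L σ w b) = Q (fun g => inner ℂ (σ g v) w) a b := by
  rw [L_apply, L_apply, Q, Finsupp.sum_inner]
  refine Finset.sum_congr rfl fun g _ => ?_
  dsimp only
  rw [Finsupp.inner_sum]
  refine Finset.sum_congr rfl fun h _ => ?_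
  dsimp only
  rw [inner_smul_left, inner_smul_right, inner_shift, mul_assoc]

theorem schur [CompleteSpace E] (σ : G →* (E ≃ₗᵢ[ℂ] E))
    (hirr : ∀ p : Submodule ℂ E, IsClosed (p : Set E) →
        (∀ g : G, ∀ v ∈ p, σ g v ∈ p) → p = ⊥ ∨ p = ⊤)
    (T : E →L[ℂ] E) (hT : IsSelfAdjoint T) (hc : ∀ g v, T (σ g v) = σ g (T v)) :
    ∃ c : ℝ, ∀ v, T v = (c : ℂ) • v := by
  have key : ∀ a ∈ spectrum ℝ T, ∀ b ∈ spectrum ℝ T, ¬ a < b := by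
    intro a ha b hb hab
    set m := (a + b) / 2 with hm
    let f : ℝ → ℝ := fun x => max (x - m) 0
    let k : ℝ → ℝ := fun x => max (m - x) 0
    have hf : Continuous f := by fun_prop
    have hk : Continuous k := by fun_prop
    have hfk : cfc f T * cfc k T = 0 := by
      rw [← cfc_mul f k T hf.continuousOn hk.continuousOn]
      have : (fun x => f x * k x) = fun _ => 0 := by
        funext x
        simp only [f, k]
        rcases le_total x m with h | h
        · rw [max_eq_right (by linarith : x - m ≤ 0)]; simp
        · rw [max_eq_right (by linarith : m - x ≤ 0)]; simp
      rw [this]; simp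
    have nz : ∀ q : ℝ → ℝ, Continuous q → ∀ x ∈ spectrum ℝ T, q x ≠ 0 → cfc q T ≠ 0 := by
      intro q hq x hx hqx h0
      have hs := cfc_map_spectrum (R := ℝ) q T hT hq.continuousOn
      have : q x ∈ spectrum ℝ (cfc q T) := by rw [hs]; exact ⟨x, hx, rfl⟩
      rw [h0] at this
      have hnt : Nontrivial (E →L[ℂ] E) := by
        by_contra hn
        rw [not_nontrivial_iff_subsingleton] at hn
        rw [spectrum.of_subsingleton] at hx
        exact hx
      rw [spectrum.zero_eq] at this
      exact hqx this
    have hcf : ∀ g v, cfc f T (σ g v) = σ g (cfc f T v) := by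
      intro g v
      have hcomm : Commute T ((σ g).toContinuousLinearEquiv : E →L[ℂ] E) := by
        ext w; simpa using hc g w
      have := hcomm.cfc_real f
      exact DFunLike.congr_fun this.eq v
    have hfb : cfc f T ≠ 0 := nz f hf b hb (by
      simp only [f]; rw [max_eq_left (by linarith)]; intro h; linarith)
    have hka : cfc k T ≠ 0 := nz k hk a ha (by
      simp only [k]; rw [max_eq_left (by linarith)]; intro h; linarith)
    rcases hirr (LinearMap.ker (cfc f T).toLinearMap) (cfc f T).isClosed_ker (by
      intro g v hv
      rw [LinearMap.mem_ker] at hv ⊢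
      have := hcf g v
      simp only [ContinuousLinearMap.coe_coe] at hv ⊢
      rw [this, hv, map_zero]) with h | h
    · apply hka
      ext v
      have : cfc k T v ∈ LinearMap.ker (cfc f T).toLinearMap := by
        rw [LinearMap.mem_ker]
        exact DFunLike.congr_fun hfk v
      rw [h] at this
      simpa using this
    · apply hfb
      ext v
      have : v ∈ LinearMap.ker (cfc f T).toLinearMap := by rw [h]; trivial
      simpa using this
  have hsub : ∃ c, spectrum ℝ T ⊆ {c} := by
    rcases (spectrum ℝ T).eq_empty_or_nonempty with h | ⟨c, hcs⟩
    · exact ⟨0, by simp [h]⟩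
    · refine ⟨c, fun x hx => ?_⟩
      rcases lt_trichotomy x c with h | h | h
      · exact absurd h (key _ hx _ hcs)
      · exact h
      · exact absurd h (key _ hcs _ hx)
  obtain ⟨c, hcs⟩ := hsub
  refine ⟨c, fun v => ?_⟩
  have := CFC.eq_algebraMap_of_spectrum_subset_singleton T c hcs hT
  rw [this, Algebra.algebraMap_eq_smul_one]
  simp

theorem dense_L (σ : G →* (E ≃ₗᵢ[ℂ] E))
    (hirr : ∀ p : Submodule ℂ E, IsClosed (p : Set E) →
        (∀ g : G, ∀ v ∈ p, σ g v ∈ p) → p = ⊥ ∨ p = ⊤) (u : E) (hu : u ≠ 0) :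
    DenseRange (L σ u) := by
  have hmem : ∀ g, σ g u ∈ LinearMap.range (L σ u) := fun g =>
    ⟨Finsupp.single g 1, by simp [L_single]⟩
  have hinv : ∀ g, ∀ v ∈ LinearMap.range (L σ u), σ g v ∈ LinearMap.range (L σ u) := by
    rintro g _ ⟨a, rfl⟩
    rw [L_apply, Finsupp.sum, map_sum]
    refine Submodule.sum_mem _ fun h _ => ?_
    rw [map_smul, rep_mul]
    exact Submodule.smul_mem _ _ (hmem _)
  rcases hirr (LinearMap.range (L σ u)).topologicalClosure
      (Submodule.isClosed_topologicalClosure _) (by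
      intro g v hv
      exact map_mem_closure (σ g).continuous hv (fun x hx => hinv g x hx)) with h | h
  · exfalso
    have : u ∈ (LinearMap.range (L σ u)).topologicalClosure :=
      Submodule.le_topologicalClosure _ (by simpa using hmem 1)
    rw [h] at this
    exact hu (by simpa using this)
  · intro x
    have : x ∈ (LinearMap.range (L σ u)).topologicalClosure := by rw [h]; trivial
    rw [← SetLike.mem_coe, Submodule.topologicalClosure_coe, LinearMap.coe_range] at this
    exact this

theorem pure_lemma [CompleteSpace E] (σ : G →* (E ≃ₗᵢ[ℂ] E))
    (hirr : ∀ p : Submodule ℂ E, IsClosed (p : Set E) →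
        (∀ g : G, ∀ v ∈ p, σ g v ∈ p) → p = ⊥ ∨ p = ⊤) (u : E) (hu : ‖u‖ = 1)
    (ξ : G → ℂ) (hb : ∀ a b, ‖Q ξ a b‖ ≤ ‖L σ u a‖ * ‖L σ u b‖)
    (hherm : ∀ a b, conj (Q ξ a b) = Q ξ b a) :
    ∀ g, ξ g = ξ 1 * inner ℂ (σ g u) u := by
  have hd := dense_L σ hirr u (by rintro rfl; simp at hu)
  -- the functional
  let ℓ : (G →₀ ℂ) →ₗ[ℂ] ℂ := Finsupp.linearCombination ℂ (fun h => ξ h⁻¹)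
  have hℓ : ∀ b, ℓ b = Q ξ (Finsupp.single 1 1) b := by
    intro b; simp [ℓ, Q, Finsupp.linearCombination_apply]
  have hℓb : ∀ b, ‖ℓ b‖ ≤ 1 * ‖L σ u b‖ := by
    intro b
    rw [hℓ]
    refine (hb _ _).trans (le_of_eq ?_)
    simp [L_single, hu]
  let τ : E := (InnerProductSpace.toDual ℂ E).symm (ℓ.extendOfNorm (L σ u))
  have hτ : ∀ b, inner ℂ τ (L σ u b) = ℓ b := by
    intro b
    simp only [τ, InnerProductSpace.toDual_symm_apply]
    exact LinearMap.extendOfNorm_eq hd ⟨1, hℓb⟩ b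
  have hτ' : ∀ h, inner ℂ (σ h τ) u = ξ h := by
    intro h
    have := hτ (Finsupp.single h⁻¹ 1)
    rw [L_single, one_smul] at this
    have h2 := inner_shift σ τ u 1 h⁻¹
    simp only [map_one, inv_inv, mul_one, LinearIsometryEquiv.coe_one, id_eq] at h2
    rw [← h2, this]
    simp [ℓ]
  have hQ : ∀ a b, inner ℂ (L σ τ a) (L σ u b) = Q ξ a b := by
    intro a b
    rw [inner_L]; congr 1; funext g; exact hτ' g
  have hbd : ∀ a, ‖L σ τ a‖ ≤ 1 * ‖L σ u a‖ := by
    intro a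
    have h1 : ∀ y, ‖inner ℂ (L σ τ a) y‖ ≤ ‖L σ u a‖ * ‖y‖ := by
      intro y
      refine hd.induction_on (p := fun y => ‖inner ℂ (L σ τ a) y‖ ≤ ‖L σ u a‖ * ‖y‖) y ?_ ?_
      · exact isClosed_le (by fun_prop) (by fun_prop)
      · intro b; rw [hQ]; exact hb a b
    have h2 := h1 (L σ τ a)
    rw [inner_self_eq_norm_sq_to_K] at h2
    simp only [norm_pow, Complex.coe_algebraMap, Complex.norm_real, norm_norm] at h2
    rcases (norm_nonneg (L σ τ a)).eq_or_lt with h3 | h3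
    · rw [← h3]; positivity
    · rw [one_mul]; nlinarith
  let T : E →L[ℂ] E := (L σ τ).extendOfNorm (L σ u)
  have hT : ∀ a, T (L σ u a) = L σ τ a := fun a => LinearMap.extendOfNorm_eq hd ⟨1, hbd⟩ a
  have hTg : ∀ g, T (σ g u) = σ g τ := by
    intro g
    have := hT (Finsupp.single g 1)
    simpa [L_single] using this
  have hTc : ∀ g v, T (σ g v) = σ g (T v) := by
    intro g v
    refine hd.induction_on (p := fun v => T (σ g v) = σ g (T v)) v ?_ ?_
    · exact isClosed_eq (by fun_prop) (by fun_prop)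
    · intro a
      rw [hT, L_apply, L_apply]
      simp only [Finsupp.sum, map_sum, map_smul, rep_mul, hTg]
  have hTs : IsSelfAdjoint T := by
    rw [ContinuousLinearMap.isSelfAdjoint_iff_isSymmetric]
    intro x y
    refine hd.induction_on₂ (p := fun x y => inner ℂ (T x) y = inner ℂ x (T y)) ?_ ?_ x y
    · exact isClosed_eq (by fun_prop) (by fun_prop)
    · intro a b
      rw [hT, hT, hQ, ← inner_conj_symm, hQ, hherm]
  obtain ⟨c, hc⟩ := schur σ hirr T hTs hTc
  have hξ : ∀ g, ξ g = c * inner ℂ (σ g u) u := by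
    intro g
    rw [← hτ', ← hTg, hc, inner_smul_left]; simp
  intro g
  have h1 := hξ 1
  simp [inner_self_eq_norm_sq_to_K, hu] at h1
  rw [h1]; exact hξ g

theorem Q_sum {ι : Type*} (s : Finset ι) (c : ι → ℂ) (f : ι → G → ℂ) (a b : G →₀ ℂ) :
    Q (fun g => ∑ j ∈ s, c j * f j g) a b = ∑ j ∈ s, c j * Q (f j) a b := by
  simp only [Q, Finsupp.sum, Finset.mul_sum]
  symm
  refine Eq.trans Finset.sum_comm ?_
  refine Finset.sum_congr rfl fun g _ => ?_
  refine Eq.trans Finset.sum_comm ?_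
  refine Finset.sum_congr rfl fun h _ => Finset.sum_congr rfl fun j _ => ?_
  ring

theorem Q_tendsto {ι : Type*} {l : Filter ι} (f : ι → G → ℂ) (f₀ : G → ℂ)
    (h : ∀ g, Tendsto (fun k => f k g) l (𝓝 (f₀ g))) (a b : G →₀ ℂ) :
    Tendsto (fun k => Q (f k) a b) l (𝓝 (Q f₀ a b)) := by
  simp only [Q, Finsupp.sum]
  exact tendsto_finsetSum _ fun g _ => tendsto_finsetSum _ fun h' _ => (h _).const_mul _

section fin
variable {ι : Type*} [Fintype ι] {K : ι → Type*} [∀ i, NormedAddCommGroup (K i)]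
  [∀ i, InnerProductSpace ℂ (K i)]

theorem Q_bound (π : ∀ i, G →* (K i ≃ₗᵢ[ℂ] K i)) (w : ∀ i, K i) (t : ι → ℝ) (ht : ∀ i, 0 ≤ t i)
    (J : Finset ι) (a b : G →₀ ℂ) :
    ‖Q (fun g => ∑ j ∈ J, (t j : ℂ) * inner ℂ (π j g (w j)) (w j)) a b‖ ^ 2 ≤
      ‖Q (fun g => ∑ j, (t j : ℂ) * inner ℂ (π j g (w j)) (w j)) a a‖ *
      ‖Q (fun g => ∑ j, (t j : ℂ) * inner ℂ (π j g (w j)) (w j)) b b‖ := by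
  have hdiag : ∀ a, ‖Q (fun g => ∑ j, (t j : ℂ) * inner ℂ (π j g (w j)) (w j)) a a‖ =
      ∑ j, t j * ‖L (π j) (w j) a‖ ^ 2 := by
    intro a
    rw [Q_sum Finset.univ (fun j => (t j : ℂ)) (fun j g => inner ℂ (π j g (w j)) (w j))]
    have : ∑ j, (t j : ℂ) * Q (fun g => inner ℂ (π j g (w j)) (w j)) a a =
        ((∑ j, t j * ‖L (π j) (w j) a‖ ^ 2 : ℝ) : ℂ) := by
      push_cast
      refine Finset.sum_congr rfl fun j _ => ?_
      rw [← inner_L, inner_self_eq_norm_sq_to_K]; simp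
    rw [this, Complex.norm_real, Real.norm_of_nonneg]
    exact Finset.sum_nonneg fun j _ => mul_nonneg (ht j) (by positivity)
  rw [hdiag, hdiag, Q_sum J (fun j => (t j : ℂ)) (fun j g => inner ℂ (π j g (w j)) (w j))]
  have h1 : ‖∑ j ∈ J, (t j : ℂ) * Q (fun g => inner ℂ (π j g (w j)) (w j)) a b‖ ≤
      ∑ j ∈ J, (√(t j) * ‖L (π j) (w j) a‖) * (√(t j) * ‖L (π j) (w j) b‖) := by
    refine (norm_sum_le _ _).trans (Finset.sum_le_sum fun j _ => ?_)
    rw [← inner_L, norm_mul, Complex.norm_real, Real.norm_of_nonneg (ht j)]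
    have := norm_inner_le_norm (𝕜 := ℂ) (L (π j) (w j) a) (L (π j) (w j) b)
    calc _ ≤ t j * (‖L (π j) (w j) a‖ * ‖L (π j) (w j) b‖) :=
          mul_le_mul_of_nonneg_left this (ht j)
      _ = (√(t j) * √(t j)) * (‖L (π j) (w j) a‖ * ‖L (π j) (w j) b‖) := by
          rw [Real.mul_self_sqrt (ht j)]
      _ = _ := by ring
  have h2 : ∀ a, ∑ j ∈ J, (√(t j) * ‖L (π j) (w j) a‖) ^ 2 ≤ ∑ j, t j * ‖L (π j) (w j) a‖ ^ 2 := by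
    intro a
    calc _ = ∑ j ∈ J, t j * ‖L (π j) (w j) a‖ ^ 2 := by
          refine Finset.sum_congr rfl fun j _ => ?_
          rw [mul_pow, Real.sq_sqrt (ht j)]
      _ ≤ _ := Finset.sum_le_sum_of_subset_of_nonneg (Finset.subset_univ _)
          fun j _ _ => mul_nonneg (ht j) (by positivity)
  calc _ ≤ (∑ j ∈ J, (√(t j) * ‖L (π j) (w j) a‖) * (√(t j) * ‖L (π j) (w j) b‖)) ^ 2 :=
        pow_le_pow_left₀ (norm_nonneg _) h1 2
    _ ≤ _ := Finset.sum_mul_sq_le_sq_mul_sq _ _ _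
    _ ≤ _ := mul_le_mul (h2 a) (h2 b) (Finset.sum_nonneg fun j _ => by positivity)
        (Finset.sum_nonneg fun j _ => mul_nonneg (ht j) (by positivity))

theorem Q_herm (π : ∀ i, G →* (K i ≃ₗᵢ[ℂ] K i)) (w : ∀ i, K i) (t : ι → ℝ)
    (J : Finset ι) (a b : G →₀ ℂ) :
    conj (Q (fun g => ∑ j ∈ J, (t j : ℂ) * inner ℂ (π j g (w j)) (w j)) a b) =
      Q (fun g => ∑ j ∈ J, (t j : ℂ) * inner ℂ (π j g (w j)) (w j)) b a := by
  rw [Q_sum J (fun j => (t j : ℂ)) (fun j g => inner ℂ (π j g (w j)) (w j)),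
    Q_sum J (fun j => (t j : ℂ)) (fun j g => inner ℂ (π j g (w j)) (w j)), map_sum]
  refine Finset.sum_congr rfl fun j _ => ?_
  rw [map_mul, Complex.conj_ofReal, ← inner_L, ← inner_L, inner_conj_symm]

theorem coef_norm_le {K : Type*} [NormedAddCommGroup K] [InnerProductSpace ℂ K]
    (π : G →* (K ≃ₗᵢ[ℂ] K)) (w : K) (hw : ‖w‖ = 1) (g : G) :
    ‖(inner ℂ (π g w) w : ℂ)‖ ≤ 1 := by
  have := norm_inner_le_norm (𝕜 := ℂ) (π g w) w
  simpa [hw] using this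

theorem sub_norm_le (π : ∀ i, G →* (K i ≃ₗᵢ[ℂ] K i)) (w : ∀ i, K i) (hw : ∀ i, ‖w i‖ = 1)
    (t : ι → ℝ) (ht : ∀ i, 0 ≤ t i) (hs : ∑ i, t i = 1) (J : Finset ι) (g : G) :
    ‖∑ j ∈ J, (t j : ℂ) * (inner ℂ (π j g (w j)) (w j) : ℂ)‖ ≤ 1 := by
  calc _ ≤ ∑ j ∈ J, t j := by
        refine (norm_sum_le _ _).trans (Finset.sum_le_sum fun j _ => ?_)
        rw [norm_mul, Complex.norm_real, Real.norm_of_nonneg (ht j)]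
        exact mul_le_of_le_one_right (ht j) (coef_norm_le _ _ (hw j) g)
    _ ≤ ∑ j, t j := Finset.sum_le_sum_of_subset_of_nonneg (Finset.subset_univ _)
          fun j _ _ => ht j
    _ = 1 := hs
end fin

theorem limit_lemma [CompleteSpace E] (σ : G →* (E ≃ₗᵢ[ℂ] E))
    (hirr : ∀ p : Submodule ℂ E, IsClosed (p : Set E) →
        (∀ g : G, ∀ v ∈ p, σ g v ∈ p) → p = ⊥ ∨ p = ⊤) (u : E) (hu : ‖u‖ = 1)
    {ι : ℕ → Type*} [∀ k, Fintype (ι k)] {K : ∀ k, ι k → Type*}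
    [∀ k i, NormedAddCommGroup (K k i)] [∀ k i, InnerProductSpace ℂ (K k i)]
    (π : ∀ k i, G →* (K k i ≃ₗᵢ[ℂ] K k i)) (w : ∀ k i, K k i) (hw : ∀ k i, ‖w k i‖ = 1)
    (t : ∀ k, ι k → ℝ) (ht : ∀ k i, 0 ≤ t k i) (hs : ∀ k, ∑ i, t k i = 1)
    (hlim : ∀ g, Tendsto (fun k => ∑ j, (t k j : ℂ) * inner ℂ (π k j g (w k j)) (w k j)) atTop
      (𝓝 (inner ℂ (σ g u) u)))
    (J : ∀ k, Finset (ι k)) (g : G) :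
    Tendsto (fun k => ∑ j ∈ J k, (t k j : ℂ) * inner ℂ (π k j g (w k j)) (w k j) -
      (∑ j ∈ J k, (t k j : ℂ)) * inner ℂ (σ g u) u) atTop (𝓝 0) := by
  rw [tendsto_iff_ultrafilter]
  intro U hU
  have hex : ∀ g, ∃ z, Tendsto
      (fun k => ∑ j ∈ J k, (t k j : ℂ) * inner ℂ (π k j g (w k j)) (w k j)) U (𝓝 z) := by
    intro g
    obtain ⟨z, -, hz⟩ := (isCompact_closedBall (0 : ℂ) 1).ultrafilter_le_nhds
      (U.map (fun k => ∑ j ∈ J k, (t k j : ℂ) * inner ℂ (π k j g (w k j)) (w k j))) (by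
        rw [le_principal_iff, Ultrafilter.coe_map, mem_map]
        refine Filter.mem_of_superset univ_mem fun k _ => ?_
        simpa using sub_norm_le (π k) (w k) (hw k) (t k) (ht k) (hs k) (J k) g)
    exact ⟨z, hz⟩
  choose ξ hξ using hex
  have hb : ∀ a b, ‖Q ξ a b‖ ≤ ‖L σ u a‖ * ‖L σ u b‖ := by
    intro a b
    have h1 := (((Q_tendsto _ _ hξ a b).norm).pow 2)
    have hl : ∀ a, Tendsto
        (fun k => ‖Q (fun g => ∑ j, (t k j : ℂ) * inner ℂ (π k j g (w k j)) (w k j)) a a‖)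
        U (𝓝 (‖L σ u a‖ ^ 2)) := by
      intro a
      have := (Q_tendsto _ _ (fun g => (hlim g).mono_left hU) a a).norm
      rw [← inner_L, inner_self_eq_norm_sq_to_K] at this
      simpa using this
    have h3 := le_of_tendsto_of_tendsto' h1 ((hl a).mul (hl b))
      fun k => Q_bound (π k) (w k) (t k) (ht k) (J k) a b
    rw [← mul_pow] at h3
    exact le_of_sq_le_sq h3 (by positivity)
  have hh : ∀ a b, conj (Q ξ a b) = Q ξ b a := by
    intro a b
    have h1 := (Complex.continuous_conj.tendsto _).comp (Q_tendsto _ _ hξ a b)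
    have h2 := Q_tendsto _ _ hξ b a
    refine tendsto_nhds_unique h1 (h2.congr fun k => ?_)
    exact (Q_herm (π k) (w k) (t k) (J k) a b).symm
  have hp := pure_lemma σ hirr u hu ξ hb hh g
  have h1 := hξ 1
  have h2 := (hξ g).sub (h1.mul_const (inner ℂ (σ g u) u))
  rw [hp, sub_self] at h2
  refine h2.congr fun k => ?_
  congr 2
  refine Finset.sum_congr rfl fun j _ => ?_
  simp [inner_self_eq_norm_sq_to_K, hw]

section avg
open MeasureTheory
open scoped Pointwise

variable [TopologicalSpace G] [IsTopologicalGroup G]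

/-- Properties of a normalized matrix coefficient used below. -/
structure IsCoef (ψ : G → ℂ) : Prop where
  cont : Continuous ψ
  bd : ∀ g, ‖ψ g‖ ≤ 1
  diff : ∀ g h, ‖ψ g - ψ (g * h)‖ ^ 2 ≤ 2 * (1 - (ψ h).re)

theorem isCoef_coef (σ : G →* (E ≃ₗᵢ[ℂ] E)) (hc : ∀ v, Continuous fun g => σ g v) (w : E)
    (hw : ‖w‖ = 1) : IsCoef (fun g => (inner ℂ (σ g w) w : ℂ)) where
  cont := (hc w).inner continuous_const
  bd := coef_norm_le σ w hw
  diff g h := by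
    have h1 : (inner ℂ (σ g w) w : ℂ) - inner ℂ (σ (g * h) w) w =
        inner ℂ (σ g (w - σ h w)) w := by
      rw [← inner_sub_left, ← rep_mul, map_sub]
    have h2 : ‖(inner ℂ (σ g (w - σ h w)) w : ℂ)‖ ≤ ‖w - σ h w‖ := by
      have := norm_inner_le_norm (𝕜 := ℂ) (σ g (w - σ h w)) w
      simpa only [LinearIsometryEquiv.norm_map, hw, mul_one] using this
    have h3 : ‖w - σ h w‖ ^ 2 = 2 * (1 - (inner ℂ (σ h w) w : ℂ).re) := by
      rw [norm_sub_sq (𝕜 := ℂ), LinearIsometryEquiv.norm_map, hw, inner_re_symm]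
      simp; ring
    rw [h1, ← h3]
    exact pow_le_pow_left₀ (norm_nonneg _) h2 2

variable [MeasurableSpace G] [BorelSpace G] [SecondCountableTopology G]
  (μ : Measure G) [μ.IsMulLeftInvariant] [IsFiniteMeasureOnCompacts μ]

/-- The smoothing of `ψ` by `f`. -/
noncomputable def A (f : G → ℝ) (ψ : G → ℂ) (g : G) : ℂ := ∫ h, f h • ψ (g * h) ∂μ

variable (f : G → ℝ) (hf : Continuous f) (hfs : HasCompactSupport f) (hf0 : ∀ h, 0 ≤ f h)
  (hf1 : ∫ h, f h ∂μ = 1)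

theorem A_integrable {f : G → ℝ} (hf : Continuous f) (hfs : HasCompactSupport f)
    {ψ : G → ℂ} (hψ : Continuous ψ) (g : G) : Integrable (fun h => f h • ψ (g * h)) μ := by
  refine Continuous.integrable_of_hasCompactSupport (by fun_prop) ?_
  exact hfs.smul_right

theorem A_sum {f : G → ℝ} (hf : Continuous f) (hfs : HasCompactSupport f) {ι : Type*}
    (s : Finset ι) (c : ι → ℂ) (ψ : ι → G → ℂ) (hψ : ∀ i, Continuous (ψ i)) (g : G) :
    A μ f (fun g => ∑ j ∈ s, c j * ψ j g) g = ∑ j ∈ s, c j * A μ f (ψ j) g := by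
  simp only [A, Finset.smul_sum]
  rw [integral_finsetSum]
  · refine Finset.sum_congr rfl fun j _ => ?_
    rw [← integral_const_mul]
    congr 1; funext h; simp; ring
  · intro j _
    exact A_integrable μ hf hfs (ψ := fun g => c j * ψ j g) (by have := hψ j; fun_prop) g

theorem A_bd {f : G → ℝ} (hf : Continuous f) (hfs : HasCompactSupport f) (hf0 : ∀ h, 0 ≤ f h)
    (hf1 : ∫ h, f h ∂μ = 1) {ψ : G → ℂ} (hψ : IsCoef ψ) (g : G) : ‖A μ f ψ g‖ ≤ 1 := by
  rw [← hf1]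
  refine norm_integral_le_of_norm_le (hf.integrable_of_hasCompactSupport hfs)
    (Eventually.of_forall fun h => ?_)
  rw [norm_smul, Real.norm_of_nonneg (hf0 h)]
  exact mul_le_of_le_one_right (hf0 h) (hψ.bd _)

theorem A_near {f : G → ℝ} (hf : Continuous f) (hfs : HasCompactSupport f) (hf0 : ∀ h, 0 ≤ f h)
    (hf1 : ∫ h, f h ∂μ = 1) {ψ : G → ℂ} (hψ : IsCoef ψ) (g : G) {η : ℝ} (hη : 0 < η) :
    ‖ψ g - A μ f ψ g‖ ≤ η / 2 + (1 - (A μ f ψ 1).re) / η := by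
  have hfi := hf.integrable_of_hasCompactSupport (μ := μ) hfs
  have h1 : ψ g - A μ f ψ g = ∫ h, f h • (ψ g - ψ (g * h)) ∂μ := by
    simp only [smul_sub]
    rw [integral_sub (hfi.smul_const _) (A_integrable μ hf hfs hψ.cont g), integral_smul_const,
      hf1, one_smul, A]
  have hre : (A μ f ψ 1).re = ∫ h, f h * (ψ h).re ∂μ := by
    have := (integral_re (A_integrable μ hf hfs hψ.cont 1))
    simp only [one_mul] at this
    simp only [A, one_mul]
    rw [← RCLike.re_eq_complex_re, ← this]
    simp
  have hi2 : Integrable (fun h => f h * (ψ h).re) μ := by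
    refine Continuous.integrable_of_hasCompactSupport ?_ hfs.mul_right
    exact hf.mul (Complex.continuous_re.comp hψ.cont)
  have hi3 : Integrable (fun h => (f h - f h * (ψ h).re) / η) μ := (hfi.sub hi2).div_const _
  have h2 : η / 2 + (1 - (A μ f ψ 1).re) / η =
      ∫ h, (f h * (η / 2) + (f h - f h * (ψ h).re) / η) ∂μ := by
    rw [integral_add (hfi.mul_const _) hi3, integral_mul_const,
      integral_div, integral_sub hfi hi2, hf1, hre, one_mul]
  rw [h1, h2]
  refine norm_integral_le_of_norm_le ((hfi.mul_const _).add hi3)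
    (Eventually.of_forall fun h => ?_)
  rw [norm_smul, Real.norm_of_nonneg (hf0 h)]
  have h3 := hψ.diff g h
  have h4 : ‖ψ g - ψ (g * h)‖ ≤ η / 2 + (1 - (ψ h).re) / η := by
    have h5 : η * ‖ψ g - ψ (g * h)‖ ≤ η * (η / 2 + (1 - (ψ h).re) / η) := by
      have : η * (η / 2 + (1 - (ψ h).re) / η) = η ^ 2 / 2 + (1 - (ψ h).re) := by
        field_simp
      rw [this]
      nlinarith [sq_nonneg (η - ‖ψ g - ψ (g * h)‖)]
    exact le_of_mul_le_mul_left h5 hη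
  calc _ ≤ f h * (η / 2 + (1 - (ψ h).re) / η) := mul_le_mul_of_nonneg_left h4 (hf0 h)
    _ = _ := by ring

theorem A_diff {f : G → ℝ} (hf : Continuous f) (hfs : HasCompactSupport f)
    {ψ : G → ℂ} (hψ : IsCoef ψ) (g g' : G) :
    ‖A μ f ψ g - A μ f ψ g'‖ ≤ ∫ h, |f (g⁻¹ * h) - f (g'⁻¹ * h)| ∂μ := by
  have ht : ∀ g, HasCompactSupport (fun h => f (g⁻¹ * h)) := fun g =>
    hfs.comp_homeomorph (Homeomorph.mulLeft g⁻¹)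
  have h1 : ∀ g, A μ f ψ g = ∫ h, f (g⁻¹ * h) • ψ h ∂μ := by
    intro g
    rw [A, ← integral_mul_left_eq_self (fun h => f (g⁻¹ * h) • ψ h) g]
    simp
  have hi : ∀ g, Integrable (fun h => f (g⁻¹ * h) • ψ h) μ := by
    intro g
    have := hψ.cont
    exact Continuous.integrable_of_hasCompactSupport (by fun_prop) (ht g).smul_right
  have hi' : ∀ g, Integrable (fun h => f (g⁻¹ * h)) μ := fun g =>
    Continuous.integrable_of_hasCompactSupport (by fun_prop) (ht g)
  rw [h1, h1, ← integral_sub (hi g) (hi g')]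
  refine norm_integral_le_of_norm_le ((hi' g).sub (hi' g')).abs (Eventually.of_forall fun h => ?_)
  rw [← sub_smul, norm_smul, Real.norm_eq_abs]
  exact mul_le_of_le_one_right (abs_nonneg _) (hψ.bd _)

theorem net {f : G → ℝ} (hf : Continuous f) (hfs : HasCompactSupport f) {C : Set G}
    (hC : IsCompact C) {δ : ℝ} (hδ : 0 < δ) :
    ∃ P : Finset G, ∀ g ∈ C, ∃ p ∈ P, ∫ h, |f (g⁻¹ * h) - f (p⁻¹ * h)| ∂μ < δ := by
  have hcont : ∀ p ∈ C, ContinuousOn (fun g => ∫ h, |f (g⁻¹ * h) - f (p⁻¹ * h)| ∂μ) C := by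
    intro p hp
    refine continuousOn_integral_of_compact_support (k := C * tsupport f) (hC.mul hfs) ?_ ?_
    · apply Continuous.continuousOn
      unfold Function.uncurry
      fun_prop
    · intro g h hg hh
      have : ∀ g ∈ C, f (g⁻¹ * h) = 0 := by
        intro g hg
        by_contra hne
        exact hh ⟨g, hg, g⁻¹ * h, subset_tsupport f hne, by simp⟩
      rw [this g hg, this p hp]; simp
  obtain ⟨P, hP, hPC⟩ := hC.elim_nhdsWithin_subcover
    (fun p => {g | ∫ h, |f (g⁻¹ * h) - f (p⁻¹ * h)| ∂μ < δ}) (by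
      intro p hp
      have := (hcont p hp) p hp
      exact this.eventually_lt_const (by simpa using hδ))
  refine ⟨P, fun g hg => ?_⟩
  have := hPC hg
  simp only [Set.mem_iUnion] at this
  obtain ⟨p, hp, h⟩ := this
  exact ⟨p, hp, h⟩

theorem bump [T2Space G] [LocallyCompactSpace G] [μ.IsOpenPosMeasure] {φ : G → ℂ}
    (hφ : IsCoef φ) (hφ1 : φ 1 = 1) {δ : ℝ} (hδ : 0 < δ) :
    ∃ f : G → ℝ, Continuous f ∧ HasCompactSupport f ∧ (∀ h, 0 ≤ f h) ∧ ∫ h, f h ∂μ = 1 ∧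
      1 - (A μ f φ 1).re ≤ δ := by
  have hcr : Continuous fun g => (φ g).re := Complex.continuous_re.comp hφ.cont
  have hcl : IsClosed {g | δ ≤ 1 - (φ g).re} :=
    isClosed_le continuous_const (continuous_const.sub hcr)
  obtain ⟨F, hF1, hF0, hFs, hF⟩ := exists_continuous_one_zero_of_isCompact
    (isCompact_singleton (x := (1 : G))) hcl (by
      simp [hφ1, hδ])
  have hpos : 0 < ∫ h, F h ∂μ :=
    F.continuous.integral_pos_of_hasCompactSupport_nonneg_nonzero hFs (fun x => (hF x).1)
      (x := 1) (by rw [hF1 rfl]; simp)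
  set c := ∫ h, F h ∂μ with hc
  let f : G → ℝ := fun h => F h / c
  have hf : Continuous f := F.continuous.div_const c
  have hfs : HasCompactSupport f := by
    have := hFs.mul_right (f' := fun _ => c⁻¹)
    simpa only [f, div_eq_mul_inv] using! this
  have hf0 : ∀ h, 0 ≤ f h := fun h => div_nonneg (hF h).1 hpos.le
  have hf1 : ∫ h, f h ∂μ = 1 := by
    simp only [f]
    rw [integral_div, div_self hpos.ne']
  have hfi := hf.integrable_of_hasCompactSupport (μ := μ) hfs
  refine ⟨f, hf, hfs, hf0, hf1, ?_⟩
  have hre : (A μ f φ 1).re = ∫ h, f h * (φ h).re ∂μ := by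
    have := (integral_re (A_integrable μ hf hfs hφ.cont 1))
    simp only [one_mul] at this
    simp only [A, one_mul]
    rw [← RCLike.re_eq_complex_re, ← this]
    simp
  have hi2 : Integrable (fun h => f h * (φ h).re) μ := by
    refine Continuous.integrable_of_hasCompactSupport ?_ hfs.mul_right
    exact hf.mul hcr
  rw [hre, ← hf1, ← integral_sub hfi hi2]
  calc _ ≤ ∫ h, f h * δ ∂μ := by
        refine integral_mono (hfi.sub hi2) (hfi.mul_const _) fun h => ?_
        by_cases hh : δ ≤ 1 - (φ h).re
        · have : f h = 0 := by simp only [f]; rw [hF0 hh]; simp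
          simp [this]
        · have := mul_le_mul_of_nonneg_left (not_le.1 hh).le (hf0 h)
          dsimp only
          linarith
    _ = _ := by rw [integral_mul_const, hf1, one_mul]

theorem approx {f : G → ℝ} (hf : Continuous f) (hfs : HasCompactSupport f) (hf0 : ∀ h, 0 ≤ f h)
    (hf1 : ∫ h, f h ∂μ = 1) {φ : G → ℂ} (hφ : IsCoef φ)
    {ι : ℕ → Type*} [∀ k, Fintype (ι k)] (ψ : ∀ k, ι k → G → ℂ) (hψ : ∀ k j, IsCoef (ψ k j))
    (t : ∀ k, ι k → ℝ) (ht : ∀ k i, 0 ≤ t k i) (hs : ∀ k, ∑ i, t k i = 1)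
    (hlim : ∀ J : ∀ k, Finset (ι k), ∀ g, Tendsto (fun k => ∑ j ∈ J k, (t k j : ℂ) * ψ k j g -
      (∑ j ∈ J k, (t k j : ℂ)) * φ g) atTop (𝓝 0))
    (P : Finset G) {δ : ℝ} (hδ : 0 < δ) :
    ∃ k j, ∀ p ∈ P, ‖A μ f (ψ k j) p - A μ f φ p‖ ≤ 3 * δ := by
  classical
  let Λ : ∀ k, ι k → (P → ℂ) := fun k j p => A μ f (ψ k j) p
  have hΛ : ∀ k j, Λ k j ∈ Metric.closedBall (0 : P → ℂ) 1 := by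
    intro k j
    rw [mem_closedBall_zero_iff, pi_norm_le_iff_of_nonneg zero_le_one]
    intro p
    exact A_bd μ hf hfs hf0 hf1 (hψ k j) p
  obtain ⟨T, hTfin, hT⟩ := Metric.totallyBounded_iff.1
    (isCompact_closedBall (0 : P → ℂ) 1).totallyBounded δ hδ
  have hex : ∀ k j, ∃ y ∈ T, dist (Λ k j) y < δ := by
    intro k j
    have := hT (hΛ k j)
    simp only [Set.mem_iUnion, Metric.mem_ball] at this
    obtain ⟨y, hy, h⟩ := this
    exact ⟨y, hy, h⟩
  choose c hcT hc using hex
  lift T to Finset (P → ℂ) using hTfin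
  have hne : ∀ k, Nonempty (ι k) := by
    intro k
    by_contra h
    rw [not_nonempty_iff] at h
    have := hs k
    simp at this
  have hTne : T.Nonempty := ⟨c 0 (hne 0).some, hcT _ _⟩
  have hN : (0 : ℝ) < T.card := by exact_mod_cast hTne.card_pos
  have hpig : ∀ k, ∃ y ∈ T, (1 / T.card : ℝ) ≤ ∑ x with c k x = y, t k x := by
    intro k
    refine Finset.exists_le_sum_fiber_of_maps_to_of_nsmul_le_sum (fun j _ => hcT k j) hTne ?_
    rw [hs k, nsmul_eq_mul, mul_one_div_cancel hN.ne']
  choose y hyT hy using hpig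
  let J : ∀ k, Finset (ι k) := fun k => Finset.univ.filter fun x => c k x = y k
  have hsJ : ∀ k, ∑ j ∈ J k, t k j ≤ 1 := fun k => by
    rw [← hs k]
    exact Finset.sum_le_sum_of_subset_of_nonneg (Finset.subset_univ _) fun j _ _ => ht k j
  have hAlim : ∀ p, Tendsto (fun k => A μ f (fun g => ∑ j ∈ J k, (t k j : ℂ) * ψ k j g -
      (∑ j ∈ J k, (t k j : ℂ)) * φ g) p) atTop (𝓝 0) := by
    intro p
    have hz : (0 : ℂ) = ∫ h, (0 : ℂ) ∂μ := by simp
    rw [hz]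
    refine tendsto_integral_of_dominated_convergence (fun h => f h * 2) ?_ ?_ ?_ ?_
    · intro k
      refine (A_integrable μ hf hfs (ψ := fun g => ∑ j ∈ J k, (t k j : ℂ) * ψ k j g -
        (∑ j ∈ J k, (t k j : ℂ)) * φ g) ?_ p).aestronglyMeasurable
      have h1 := fun j => (hψ k j).cont
      have h2 := hφ.cont
      fun_prop
    · exact (hf.integrable_of_hasCompactSupport hfs).mul_const _
    · intro k
      refine Eventually.of_forall fun h => ?_
      rw [norm_smul, Real.norm_of_nonneg (hf0 h)]
      refine mul_le_mul_of_nonneg_left ?_ (hf0 h)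
      have h1 : ‖∑ j ∈ J k, (t k j : ℂ) * ψ k j (p * h)‖ ≤ 1 := by
        refine le_trans ((norm_sum_le _ _).trans (Finset.sum_le_sum fun j _ => ?_)) (hsJ k)
        rw [norm_mul, Complex.norm_real, Real.norm_of_nonneg (ht k j)]
        exact mul_le_of_le_one_right (ht k j) ((hψ k j).bd _)
      have h2 : ‖(∑ j ∈ J k, (t k j : ℂ)) * φ (p * h)‖ ≤ 1 := by
        rw [norm_mul, ← Complex.ofReal_sum, Complex.norm_real,
          Real.norm_of_nonneg (Finset.sum_nonneg fun j _ => ht k j)]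
        exact mul_le_one₀ (hsJ k) (norm_nonneg _) (hφ.bd _)
      refine (norm_sub_le _ _).trans ?_
      linarith
    · refine Eventually.of_forall fun h => ?_
      have := (hlim J (p * h)).const_smul (f h)
      simpa only [smul_zero] using this
  have hev : ∀ᶠ k in atTop, ∀ p ∈ P, ‖A μ f (fun g => ∑ j ∈ J k, (t k j : ℂ) * ψ k j g -
      (∑ j ∈ J k, (t k j : ℂ)) * φ g) p‖ < δ / T.card := by
    rw [Finset.eventually_all]
    intro p _
    have := (hAlim p).norm
    rw [norm_zero] at this
    exact this.eventually_lt_const (by positivity)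
  obtain ⟨k, hk⟩ := hev.exists
  set s := ∑ j ∈ J k, t k j with hsdef
  have hsN : 1 / T.card ≤ s := hy k
  have hspos : 0 < s := lt_of_lt_of_le (by positivity) hsN
  obtain ⟨j₀, hj₀⟩ : (J k).Nonempty := by
    rw [Finset.nonempty_iff_ne_empty]
    intro h
    rw [hsdef, h] at hspos
    simp at hspos
  refine ⟨k, j₀, fun p hp => ?_⟩
  have hclose : ∀ j ∈ J k, ‖A μ f (ψ k j) p - A μ f (ψ k j₀) p‖ ≤ 2 * δ := by
    intro j hj
    have e1 : c k j = y k := by simpa [J] using hj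
    have e2 : c k j₀ = y k := by simpa [J] using hj₀
    have d1 := hc k j
    have d2 := hc k j₀
    rw [e1] at d1
    rw [e2] at d2
    have d3 : dist (Λ k j) (Λ k j₀) ≤ 2 * δ := by
      have := dist_triangle_right (Λ k j) (Λ k j₀) (y k)
      linarith
    have d4 := (dist_le_pi_dist (Λ k j) (Λ k j₀) ⟨p, hp⟩).trans d3
    rwa [dist_eq_norm] at d4
  have hA : A μ f (fun g => ∑ j ∈ J k, (t k j : ℂ) * ψ k j g -
      (∑ j ∈ J k, (t k j : ℂ)) * φ g) p =
      ∑ j ∈ J k, (t k j : ℂ) * A μ f (ψ k j) p - (s : ℂ) * A μ f φ p := by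
    rw [← A_sum μ hf hfs (J k) _ _ (fun j => (hψ k j).cont)]
    simp only [A, smul_sub]
    have hsc : ∑ j ∈ J k, (t k j : ℂ) = (s : ℂ) := by rw [hsdef]; push_cast; rfl
    rw [hsc, ← integral_const_mul, ← integral_sub]
    · congr 1; funext h; simp only [Complex.real_smul]; ring
    · refine A_integrable μ hf hfs (ψ := fun g => ∑ j ∈ J k, (t k j : ℂ) * ψ k j g) ?_ p
      have h1 := fun j => (hψ k j).cont
      fun_prop
    · exact (A_integrable μ hf hfs hφ.cont p).const_mul _
  have h1 := (hk p hp).le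
  rw [hA] at h1
  have h2 : ‖∑ j ∈ J k, (t k j : ℂ) * A μ f (ψ k j) p - (s : ℂ) * A μ f (ψ k j₀) p‖ ≤
      s * (2 * δ) := by
    have : ∑ j ∈ J k, (t k j : ℂ) * A μ f (ψ k j) p - (s : ℂ) * A μ f (ψ k j₀) p =
        ∑ j ∈ J k, (t k j : ℂ) * (A μ f (ψ k j) p - A μ f (ψ k j₀) p) := by
      simp only [mul_sub, Finset.sum_sub_distrib]
      rw [← Finset.sum_mul, hsdef]; push_cast; rfl
    rw [this, hsdef, Finset.sum_mul]
    refine (norm_sum_le _ _).trans (Finset.sum_le_sum fun j hj => ?_)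
    rw [norm_mul, Complex.norm_real, Real.norm_of_nonneg (ht k j)]
    exact mul_le_mul_of_nonneg_left (hclose j hj) (ht k j)
  have h3 : δ / T.card ≤ s * δ := by
    have := mul_le_mul_of_nonneg_right hsN hδ.le
    calc δ / T.card = 1 / T.card * δ := by ring
      _ ≤ _ := this
  have h4 : s * ‖A μ f (ψ k j₀) p - A μ f φ p‖ ≤ s * (3 * δ) := by
    have : ‖(s : ℂ) * (A μ f (ψ k j₀) p - A μ f φ p)‖ =
        s * ‖A μ f (ψ k j₀) p - A μ f φ p‖ := by
      rw [norm_mul, Complex.norm_real, Real.norm_of_nonneg hspos.le]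
    rw [← this]
    have e : (s : ℂ) * (A μ f (ψ k j₀) p - A μ f φ p) =
        (∑ j ∈ J k, (t k j : ℂ) * A μ f (ψ k j) p - (s : ℂ) * A μ f φ p) -
        (∑ j ∈ J k, (t k j : ℂ) * A μ f (ψ k j) p - (s : ℂ) * A μ f (ψ k j₀) p) := by ring
    rw [e]
    refine (norm_sub_le _ _).trans ?_
    linarith
  exact le_of_mul_le_mul_left h4 hspos

theorem approx_unif [T2Space G] [LocallyCompactSpace G] [μ.IsOpenPosMeasure]
    {φ : G → ℂ} (hφ : IsCoef φ) (hφ1 : φ 1 = 1)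
    {ι : ℕ → Type*} [∀ k, Fintype (ι k)] (ψ : ∀ k, ι k → G → ℂ) (hψ : ∀ k j, IsCoef (ψ k j))
    (t : ∀ k, ι k → ℝ) (ht : ∀ k i, 0 ≤ t k i) (hs : ∀ k, ∑ i, t k i = 1)
    (hlim : ∀ J : ∀ k, Finset (ι k), ∀ g, Tendsto (fun k => ∑ j ∈ J k, (t k j : ℂ) * ψ k j g -
      (∑ j ∈ J k, (t k j : ℂ)) * φ g) atTop (𝓝 0))
    {C : Set G} (hC : IsCompact C) {ε : ℝ} (hε : 0 < ε) :
    ∃ k j, ∀ g ∈ C, ‖φ g - ψ k j g‖ < ε := by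
  classical
  set η := ε / 4 with hη
  have hη0 : 0 < η := by positivity
  set δ := η ^ 2 / (10 * (1 + η)) with hδ
  have hδ0 : 0 < δ := by positivity
  obtain ⟨f, hf, hfs, hf0, hf1, hfφ⟩ := bump μ hφ hφ1 hδ0
  obtain ⟨P, hP⟩ := net μ hf hfs hC hδ0
  obtain ⟨k, j, hkj⟩ := approx μ hf hfs hf0 hf1 hφ ψ hψ t ht hs hlim (insert 1 P) hδ0
  refine ⟨k, j, fun g hg => ?_⟩
  obtain ⟨p, hp, hgp⟩ := hP g hg
  have n1 := A_near μ hf hfs hf0 hf1 hφ g hη0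
  have n2 := A_near μ hf hfs hf0 hf1 (hψ k j) g hη0
  have d1 := A_diff μ hf hfs hφ g p
  have d2 := A_diff μ hf hfs (hψ k j) g p
  have c1 := hkj p (Finset.mem_insert_of_mem hp)
  have c2 := hkj 1 (Finset.mem_insert_self _ _)
  have r := (Complex.abs_re_le_norm _).trans c2
  rw [Complex.sub_re, abs_le] at r
  have b1 : (1 - (A μ f φ 1).re) / η ≤ δ / η := div_le_div_of_nonneg_right hfφ hη0.le
  have b2 : (1 - (A μ f (ψ k j) 1).re) / η ≤ (4 * δ) / η :=
    div_le_div_of_nonneg_right (by linarith [r.1]) hη0.le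
  have b3 : 5 * δ + (δ / η + 4 * δ / η) = η / 2 := by
    rw [hδ]; field_simp; ring
  have e : φ g - ψ k j g = (φ g - A μ f φ g) + (A μ f φ g - A μ f φ p)
      - (A μ f (ψ k j) p - A μ f φ p) - (A μ f (ψ k j) g - A μ f (ψ k j) p)
      - (ψ k j g - A μ f (ψ k j) g) := by ring
  have tri : ‖φ g - ψ k j g‖ ≤ ‖φ g - A μ f φ g‖ + ‖A μ f φ g - A μ f φ p‖
      + ‖A μ f (ψ k j) p - A μ f φ p‖ + ‖A μ f (ψ k j) g - A μ f (ψ k j) p‖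
      + ‖ψ k j g - A μ f (ψ k j) g‖ := by
    rw [e]
    refine (norm_sub_le _ _).trans (add_le_add_left ?_ _)
    refine (norm_sub_le _ _).trans (add_le_add_left ?_ _)
    refine (norm_sub_le _ _).trans (add_le_add_left ?_ _)
    exact norm_add_le _ _
  linarith
end avg
end WeakCont

/-- **Corollary B.5.**
Let `G` be a locally compact Hausdorff second-countable topological group, `(πₙ, Hₙ)` a
sequence of irreducible unitary representations of `G`, and `(σ, E)` an irreducible unitary
representation of `G`.  Assume (a) `σ` is weakly contained in the Hilbert direct sum of the
`πₙ`, and (b) `σ` is isolated among Fell limits: whenever a sequence of irreducible unitary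
representations `(ρₖ, Fₖ)` of `G` has normalized matrix coefficients converging uniformly on
compact subsets of `G` to a normalized matrix coefficient of `σ`, some `ρₖ` is unitarily
equivalent to `σ`.  Then some `πᵢ` is unitarily equivalent to `σ`. -/
theorem unitarily_equiv_of_weak_containment_of_isolated
    {G : Type u} [TopologicalSpace G] [Group G] [IsTopologicalGroup G]
    [LocallyCompactSpace G] [T2Space G] [SecondCountableTopology G]
    {H : ℕ → Type u} [∀ n, NormedAddCommGroup (H n)] [∀ n, InnerProductSpace ℂ (H n)]
    [∀ n, CompleteSpace (H n)]
    (π : ∀ n, G →* (H n ≃ₗᵢ[ℂ] H n))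
    (hπcont : ∀ (n : ℕ) (v : H n), Continuous fun g : G => π n g v)
    (hπirr : ∀ n : ℕ, Nontrivial (H n) ∧
      ∀ p : Submodule ℂ (H n), IsClosed (p : Set (H n)) →
        (∀ g : G, ∀ v ∈ p, π n g v ∈ p) → p = ⊥ ∨ p = ⊤)
    {E : Type u} [NormedAddCommGroup E] [InnerProductSpace ℂ E] [CompleteSpace E]
    (σ : G →* (E ≃ₗᵢ[ℂ] E))
    (hσcont : ∀ v : E, Continuous fun g : G => σ g v)
    (hσirr : Nontrivial E ∧
      ∀ p : Submodule ℂ E, IsClosed (p : Set E) →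
        (∀ g : G, ∀ v ∈ p, σ g v ∈ p) → p = ⊥ ∨ p = ⊤)
    -- (a) weak containment in the Hilbert direct sum of the `πₙ`
    (hweak : ∀ u : E, ‖u‖ = 1 → ∀ C : Set G, IsCompact C → ∀ ε : ℝ, 0 < ε →
      ∃ (m : ℕ) (idx : Fin m → ℕ) (w : ∀ j : Fin m, H (idx j)) (t : Fin m → ℝ),
        (∀ j, ‖w j‖ = 1) ∧ (∀ j, 0 ≤ t j) ∧ (∑ j, t j = 1) ∧
        ∀ g ∈ C,
          ‖(inner ℂ (σ g u) u : ℂ) -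
            ∑ j, (t j : ℂ) * (inner ℂ (π (idx j) g (w j)) (w j) : ℂ)‖ < ε)
    -- (b) `σ` is isolated among Fell limits
    (hisolated : ∀ (F : ℕ → Type u) [∀ k, NormedAddCommGroup (F k)]
      [∀ k, InnerProductSpace ℂ (F k)] [∀ k, CompleteSpace (F k)]
      (ρ : ∀ k, G →* (F k ≃ₗᵢ[ℂ] F k)),
      (∀ (k : ℕ) (x : F k), Continuous fun g : G => ρ k g x) →
      (∀ k : ℕ, Nontrivial (F k) ∧
        ∀ p : Submodule ℂ (F k), IsClosed (p : Set (F k)) →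
          (∀ g : G, ∀ x ∈ p, ρ k g x ∈ p) → p = ⊥ ∨ p = ⊤) →
      ∀ (w : ∀ k : ℕ, F k) (u : E), (∀ k, ‖w k‖ = 1) → ‖u‖ = 1 →
        (∀ C : Set G, IsCompact C →
          TendstoUniformlyOn (fun (k : ℕ) (g : G) => (inner ℂ (ρ k g (w k)) (w k) : ℂ))
            (fun g : G => (inner ℂ (σ g u) u : ℂ)) atTop C) →
        ∃ (k : ℕ) (e : F k ≃ₗᵢ[ℂ] E), ∀ (g : G) (x : F k), e (ρ k g x) = σ g (e x)) :
    ∃ (i : ℕ) (e : H i ≃ₗᵢ[ℂ] E), ∀ (g : G) (x : H i), e (π i g x) = σ g (e x) := by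
  classical
  letI : MeasurableSpace G := borel G
  haveI : BorelSpace G := ⟨rfl⟩
  let μ : MeasureTheory.Measure G := MeasureTheory.Measure.haar
  haveI : Nontrivial E := hσirr.1
  obtain ⟨u, hu⟩ := exists_norm_eq E (zero_le_one (α := ℝ))
  let K : CompactExhaustion G := default
  have hw := fun k : ℕ => hweak u hu (K k) (K.isCompact k) (1 / ((k : ℝ) + 1)) (by positivity)
  choose m idx w t hw1 ht hs happ using hw
  have hlim : ∀ g, Tendsto
      (fun k => ∑ j, (t k j : ℂ) * inner ℂ (π (idx k j) g (w k j)) (w k j)) atTop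
      (𝓝 (inner ℂ (σ g u) u)) := by
    intro g
    rw [tendsto_iff_norm_sub_tendsto_zero]
    obtain ⟨k₀, hk₀⟩ := K.exists_mem g
    refine squeeze_zero' (Eventually.of_forall fun _ => norm_nonneg _) ?_
      (tendsto_one_div_add_atTop_nhds_zero_nat (𝕜 := ℝ))
    filter_upwards [eventually_ge_atTop k₀] with k hk
    rw [norm_sub_rev]
    exact (happ k g (K.subset hk hk₀)).le
  have hJ := WeakCont.limit_lemma σ hσirr.2 u hu (fun k j => π (idx k j)) w hw1 t ht hs hlim
  have hφ1 : (inner ℂ (σ 1 u) u : ℂ) = 1 := by simp [inner_self_eq_norm_sq_to_K, hu]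
  have hap := fun k : ℕ => WeakCont.approx_unif μ (WeakCont.isCoef_coef σ hσcont u hu) hφ1
    (fun k j g => (inner ℂ (π (idx k j) g (w k j)) (w k j) : ℂ))
    (fun k j => WeakCont.isCoef_coef (π (idx k j)) (hπcont _) (w k j) (hw1 k j)) t ht hs hJ
    (K.isCompact k) (ε := 1 / ((k : ℝ) + 1)) (by positivity)
  choose a b hab using hap
  obtain ⟨k, e, he⟩ := hisolated (fun k => H (idx (a k) (b k))) (fun k => π (idx (a k) (b k)))
    (fun k => hπcont _) (fun k => hπirr _) (fun k => w (a k) (b k)) u (fun k => hw1 _ _) hu (by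
      intro C hC
      obtain ⟨k₀, hk₀⟩ := K.exists_superset_of_isCompact hC
      rw [Metric.tendstoUniformlyOn_iff]
      intro ε hε
      have h1 := (tendsto_one_div_add_atTop_nhds_zero_nat (𝕜 := ℝ)).eventually_lt_const hε
      filter_upwards [eventually_ge_atTop k₀, h1] with k hk hk1 g hg
      rw [dist_eq_norm]
      exact (hab k g (K.subset hk (hk₀ hg))).trans hk1)
  exact ⟨_, e, he⟩
end
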